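/- arXiv:2511.05287 — 7 statements merged into one kernel-verified Lean document; each statement's English description precedes it below -/
import Mathlib

section
/- Let R be a unique factorization domain and let f be a nonzero Dirichlet polynomial over R whose degree n is composite, and let p_n denote the smallest prime divisor of n. If there exists an index i with n − p_n < i < n and f(i) ≠ 0, then f is irreducible over R, i.e., f cannot be written as a product of two nonconstant Dirichlet polynomials with coefficients in R. -/
/-!
Suppose `f = g * h` with `g`, `h` nonconstant of degrees `a, b ≥ 2`. Since `R` is a domain, degrees
multiply (`mul_apply_degree`), so `n = a * b`, and both `a` and `b` are at least the smallest prime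
divisor `p` of `n`. Any other index in the support of `f` is a product `j * k` with `j ≤ a`, `k ≤ b`
and one of the inequalities strict, so it is at most
`max ((a - 1) * b) (a * (b - 1)) = n - min a b ≤ n - p`. Hence the support of `f` does not meet the
open interval from `n - p` to `n`.
-/

namespace DirichletPoly

variable {R : Type*}

/-- A Dirichlet polynomial is an arithmetic function with finite support. -/
def IsDP [Zero R] (f : ArithmeticFunction R) : Prop := (Function.support ⇑f).Finite

/-- `f` is nonconstant: its support contains some `i ≥ 2`. -/
def Nonconst [Zero R] (f : ArithmeticFunction R) : Prop := ∃ i : ℕ, 2 ≤ i ∧ f i ≠ 0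

/-- `f` is irreducible over `R`: it cannot be written as a product of two nonconstant
Dirichlet polynomials with coefficients in `R`. -/
def IrreducibleDP [CommSemiring R] (f : ArithmeticFunction R) : Prop :=
  ¬ ∃ g h : ArithmeticFunction R, IsDP g ∧ IsDP h ∧ Nonconst g ∧ Nonconst h ∧ f = g * h

/-- `f` is algebraically primitive: the gcd of the elements of its support is `1`. -/
def AlgPrimitive [Zero R] (f : ArithmeticFunction R) : Prop :=
  ∀ d : ℕ, (∀ i : ℕ, f i ≠ 0 → d ∣ i) → d = 1

/-- A nonconstant Dirichlet polynomial has a degree, and it is at least `2`. -/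
lemma exists_degree [Zero R] {g : ArithmeticFunction R} (hg : IsDP g) (hc : Nonconst g) :
    ∃ a : ℕ, 2 ≤ a ∧ g a ≠ 0 ∧ ∀ i, g i ≠ 0 → i ≤ a := by
  obtain ⟨j, hj2, hj⟩ := hc
  obtain ⟨a, ha, hmax⟩ := Set.exists_max_image (Function.support ⇑g) id hg ⟨j, hj⟩
  exact ⟨a, hj2.trans (hmax j hj), ha, fun i hi => hmax i hi⟩

lemma exists_factors_of_mul_apply_ne_zero [Semiring R] {g h : ArithmeticFunction R} {m : ℕ}
    (hm : (g * h) m ≠ 0) : ∃ j k : ℕ, j * k = m ∧ g j ≠ 0 ∧ h k ≠ 0 := by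
  rw [ArithmeticFunction.mul_apply] at hm
  obtain ⟨⟨j, k⟩, hx, hne⟩ := Finset.exists_ne_zero_of_sum_ne_zero hm
  exact ⟨j, k, (Nat.mem_divisorsAntidiagonal.mp hx).1, left_ne_zero_of_mul hne,
    right_ne_zero_of_mul hne⟩

/-- The coefficient of a product at the product of the degrees is the product of the leading
coefficients. -/
lemma mul_apply_degree [Semiring R] {g h : ArithmeticFunction R} {a b : ℕ}
    (ha : 0 < a) (hb : 0 < b)
    (hga : ∀ i, g i ≠ 0 → i ≤ a) (hhb : ∀ i, h i ≠ 0 → i ≤ b) :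
    (g * h) (a * b) = g a * h b := by
  rw [ArithmeticFunction.mul_apply]
  refine Finset.sum_eq_single (a, b) ?_ ?_
  · rintro ⟨j, k⟩ hx hne
    have hjk : j * k = a * b := (Nat.mem_divisorsAntidiagonal.mp hx).1
    by_contra hz
    have hj := hga j (left_ne_zero_of_mul hz)
    have hk := hhb k (right_ne_zero_of_mul hz)
    have hja : j = a := by
      by_contra hlt
      have : j < a := lt_of_le_of_ne hj hlt
      nlinarith
    subst hja
    exact hne (by rw [Nat.eq_of_mul_eq_mul_left ha hjk])
  · intro hx
    exact absurd (Nat.mem_divisorsAntidiagonal.mpr ⟨rfl, by positivity⟩) hx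

/-- A Dirichlet polynomial of composite degree `n` over a UFD having a
nonzero coefficient at some index `i` with `n - p_n < i < n`, where `p_n` is the smallest
prime divisor of `n`, is irreducible. -/
theorem composite_degree_irreducible
    [CommRing R] [IsDomain R] [UniqueFactorizationMonoid R]
    (f : ArithmeticFunction R) (hfin : IsDP f)
    (n : ℕ) (hn2 : 2 ≤ n) (hncomp : ¬ n.Prime)
    (hdeg : f n ≠ 0) (hdeg' : ∀ i : ℕ, n < i → f i = 0)
    (i : ℕ) (hi1 : n - n.minFac < i) (hi2 : i < n) (hi : f i ≠ 0) :
    IrreducibleDP f := by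
  rintro ⟨g, h, hg, hh, hgc, hhc, rfl⟩
  obtain ⟨a, ha2, ha, hga⟩ := exists_degree hg hgc
  obtain ⟨b, hb2, hb, hhb⟩ := exists_degree hh hhc
  have hab : a * b = n := by
    apply le_antisymm
    · by_contra hlt
      have h0 := hdeg' (a * b) (not_le.mp hlt)
      rw [mul_apply_degree (by omega) (by omega) hga hhb] at h0
      exact mul_ne_zero ha hb h0
    · obtain ⟨j, k, hjk, hj, hk⟩ := exists_factors_of_mul_apply_ne_zero hdeg
      exact hjk ▸ Nat.mul_le_mul (hga j hj) (hhb k hk)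
  have hpa : n.minFac ≤ a := Nat.minFac_le_of_dvd ha2 ⟨b, hab.symm⟩
  have hpb : n.minFac ≤ b := Nat.minFac_le_of_dvd hb2 ⟨a, by rw [← hab, mul_comm]⟩
  obtain ⟨j, k, hjk, hj, hk⟩ := exists_factors_of_mul_apply_ne_zero hi
  have hja := hga j hj
  have hkb := hhb k hk
  have hlt : n < i + n.minFac := by omega
  rcases hja.lt_or_eq with hja | rfl
  · have h1 : (j + 1) * b ≤ a * b := Nat.mul_le_mul_right b hja
    have h2 : j * k ≤ j * b := Nat.mul_le_mul_left j hkb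
    nlinarith
  · have hkb' : k < b := lt_of_le_of_ne hkb (by rintro rfl; omega)
    have h1 : j * (k + 1) ≤ j * b := Nat.mul_le_mul_left j hkb'
    nlinarith

end DirichletPoly
end

section
/- Let R be a unique factorization domain and let f be a Dirichlet polynomial over R with min-degree m > 1 and degree n (so f(m) ≠ 0 and f(n) ≠ 0), and let p_m and p_n be the smallest prime divisors of m and n, respectively. If m > n/p_n and there exists an index i with m < i < m + p_m and f(i) ≠ 0, then f is irreducible over R. -/
/-!
If `f = g * h` with `g`, `h` nonconstant, let `a`, `b` be the min-degrees and `A`, `B` the degrees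
of `g`, `h`. Over a domain the extreme coefficients do not cancel, so `m = a * b` and `n = A * B`.
Since `A, B ≥ 2` divide `n`, both are at least `p_n`; if `a = 1` then
`n < m * p_n = b * p_n ≤ B * A = n`, which is absurd, and symmetrically for `b = 1`.
So `a, b ≥ 2` divide `m`, and both are at least `p_m`. Any index `i ≠ m` in the support of `f` is
`x * y` with `x ≥ a`, `y ≥ b`, not both equalities, whence `i ≥ a * b + min a b ≥ m + p_m`.
-/

namespace DirichletPoly

variable {R : Type*}

lemma exists_factor_of_mul_ne_zero [CommRing R] {g h : ArithmeticFunction R} {k : ℕ}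
    (hk : (g * h) k ≠ 0) : ∃ x y, x * y = k ∧ g x ≠ 0 ∧ h y ≠ 0 := by
  rw [ArithmeticFunction.mul_apply] at hk
  obtain ⟨p, hp, hne⟩ := Finset.exists_ne_zero_of_sum_ne_zero hk
  exact ⟨p.1, p.2, (Nat.mem_divisorsAntidiagonal.1 hp).1, left_ne_zero_of_mul hne,
    right_ne_zero_of_mul hne⟩

/-- If `a * b` arises only as `a * b` from the supports of `g` and `h`, the coefficient of the
product there is a single nonzero term. This covers both extreme coefficients. -/
lemma mul_ne_zero_of_unique [CommRing R] [IsDomain R] {g h : ArithmeticFunction R} {a b : ℕ}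
    (ha : g a ≠ 0) (hb : h b ≠ 0)
    (hu : ∀ x y, x * y = a * b → g x ≠ 0 → h y ≠ 0 → x = a ∧ y = b) : (g * h) (a * b) ≠ 0 := by
  have ha0 : a ≠ 0 := by rintro rfl; simp at ha
  have hb0 : b ≠ 0 := by rintro rfl; simp at hb
  rw [ArithmeticFunction.mul_apply, Finset.sum_eq_single (a, b)]
  · exact mul_ne_zero ha hb
  · rintro ⟨x, y⟩ hp hne
    by_contra hc
    obtain ⟨rfl, rfl⟩ := hu x y (Nat.mem_divisorsAntidiagonal.1 hp).1 (left_ne_zero_of_mul hc)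
      (right_ne_zero_of_mul hc)
    exact hne rfl
  · intro hn
    exact absurd (Nat.mem_divisorsAntidiagonal.2 ⟨rfl, mul_ne_zero ha0 hb0⟩) hn

/-- A nonconstant Dirichlet polynomial has a min-degree `a` and a degree `A`, with `A ≥ 2`. -/
lemma exists_min_max [CommRing R] {g : ArithmeticFunction R} (hg : IsDP g) (hc : Nonconst g) :
    ∃ a A, 0 < a ∧ a ≤ A ∧ 2 ≤ A ∧ g a ≠ 0 ∧ g A ≠ 0 ∧ ∀ x, g x ≠ 0 → a ≤ x ∧ x ≤ A := by
  obtain ⟨i, hi2, hi⟩ := hc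
  obtain ⟨a, ha, hamin⟩ := Set.exists_min_image _ id hg ⟨i, hi⟩
  obtain ⟨A, hA, hAmax⟩ := Set.exists_max_image _ id hg ⟨i, hi⟩
  refine ⟨a, A, Nat.pos_of_ne_zero ?_, hamin A hA, hi2.trans (hAmax i hi), ha, hA,
    fun x hx => ⟨hamin x hx, hAmax x hx⟩⟩
  rintro rfl
  simp at ha

lemma eq_of_mul_eq_of_le {a b x y : ℕ} (ha : 0 < a) (hb : 0 < b) (hx : a ≤ x) (hy : b ≤ y)
    (h : x * y = a * b) : x = a ∧ y = b := by
  constructor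
  · by_contra hne
    have : a + 1 ≤ x := by omega
    nlinarith [Nat.mul_le_mul this hy]
  · by_contra hne
    have : b + 1 ≤ y := by omega
    nlinarith [Nat.mul_le_mul hx this]

/-- Let `f` be a Dirichlet polynomial over a UFD with min-degree `m > 1`
and degree `n`, and let `p_m`, `p_n` be the smallest prime divisors of `m`, `n`.
If `m > n / p_n` and `f` has a nonzero coefficient at some `i` with `m < i < m + p_m`,
then `f` is irreducible. -/
theorem min_degree_irreducible
    [CommRing R] [IsDomain R] [UniqueFactorizationMonoid R]
    (f : ArithmeticFunction R) (hfin : IsDP f)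
    (m n : ℕ) (hm1 : 1 < m)
    (hmin : f m ≠ 0) (hmin' : ∀ i : ℕ, i < m → f i = 0)
    (hdeg : f n ≠ 0) (hdeg' : ∀ i : ℕ, n < i → f i = 0)
    (hmn : n < m * n.minFac)
    (i : ℕ) (hi1 : m < i) (hi2 : i < m + m.minFac) (hi : f i ≠ 0) :
    IrreducibleDP f := by
  rintro ⟨g, h, hg, hh, hgc, hhc, rfl⟩
  obtain ⟨a, A, ha, haA, hA2, hga, hgA, hgr⟩ := exists_min_max hg hgc
  obtain ⟨b, B, hb, hbB, hB2, hhb, hhB, hhr⟩ := exists_min_max hh hhc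
  have hab : (g * h) (a * b) ≠ 0 := mul_ne_zero_of_unique hga hhb fun x y hxy hx hy =>
    eq_of_mul_eq_of_le ha hb (hgr x hx).1 (hhr y hy).1 hxy
  have hAB : (g * h) (A * B) ≠ 0 := mul_ne_zero_of_unique hgA hhB fun x y hxy hx hy => by
    have hx0 : x ≠ 0 := by rintro rfl; simp at hx
    have hy0 : y ≠ 0 := by rintro rfl; simp at hy
    have := eq_of_mul_eq_of_le (Nat.pos_of_ne_zero hx0) (Nat.pos_of_ne_zero hy0)
      (hgr x hx).2 (hhr y hy).2 hxy.symm
    exact ⟨this.1.symm, this.2.symm⟩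
  have hm : m = a * b := by
    obtain ⟨x, y, rfl, hx, hy⟩ := exists_factor_of_mul_ne_zero hmin
    exact le_antisymm (not_lt.1 fun hlt => hab (hmin' _ hlt))
      (Nat.mul_le_mul (hgr x hx).1 (hhr y hy).1)
  have hn : n = A * B := by
    obtain ⟨x, y, rfl, hx, hy⟩ := exists_factor_of_mul_ne_zero hdeg
    exact le_antisymm (Nat.mul_le_mul (hgr x hx).2 (hhr y hy).2)
      (not_lt.1 fun hlt => hAB (hdeg' _ hlt))
  have hpA : n.minFac ≤ A := Nat.minFac_le_of_dvd hA2 (hn ▸ dvd_mul_right A B)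
  have hpB : n.minFac ≤ B := Nat.minFac_le_of_dvd hB2 (hn ▸ dvd_mul_left B A)
  have ha2 : 2 ≤ a := by
    by_contra hlt
    obtain rfl : a = 1 := by omega
    have := Nat.mul_le_mul hbB hpA
    rw [hm, one_mul] at hmn
    linarith [mul_comm A B]
  have hb2 : 2 ≤ b := by
    by_contra hlt
    obtain rfl : b = 1 := by omega
    have := Nat.mul_le_mul haA hpB
    rw [hm, mul_one] at hmn
    linarith
  have hpa : m.minFac ≤ a := Nat.minFac_le_of_dvd ha2 (hm ▸ dvd_mul_right a b)
  have hpb : m.minFac ≤ b := Nat.minFac_le_of_dvd hb2 (hm ▸ dvd_mul_left b a)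
  obtain ⟨x, y, rfl, hx, hy⟩ := exists_factor_of_mul_ne_zero hi
  have hax := (hgr x hx).1
  have hby := (hhr y hy).1
  rcases hax.eq_or_lt with rfl | hlt
  · rcases hby.eq_or_lt with rfl | hlt
    · omega
    · have := Nat.mul_le_mul (le_refl a) (Nat.succ_le_of_lt hlt)
      rw [Nat.mul_succ] at this
      omega
  · have := Nat.mul_le_mul (Nat.succ_le_of_lt hlt) hby
    rw [Nat.succ_mul] at this
    omega

end DirichletPoly
end

section
/- Let R be a unique factorization domain and let f be an algebraically primitive Dirichlet polynomial over R with min-degree m and degree n, m < n, f(m) ≠ 0 and f(n) ≠ 0. If ρ(m,n) = 1, then f is irreducible over R. -/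
/-!
If `f = g * h`, write `a`, `c` for the min-degrees and `b`, `d` for the degrees of `g`, `h`. Over a
domain the extreme coefficients of a product are products of the extreme coefficients, so
`m = a * c` and `n = b * d` (`minDeg_mul`, `deg_mul`). Since `(b / a) * (d / c) = n / m`, one of the
quotients, say `b / a`, is at most `√(n / m)`; as `b ∣ n` and `a ∣ m`, it is at most `ρ(m, n) = 1`,
which forces `a = b`. Then `g` is supported at `a` alone, so `a` divides every element of the
support of `f`. Primitivity gives `a = 1`, hence `g` is constant (`not_nonconst_of_le_sqrt`).
-/

namespace DirichletPoly

variable {R : Type*}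

/-- The rational square root `ρ(m,n)`: the largest quotient `d/c` with `d ∣ n`, `c ∣ m`
and `d/c ≤ √(n/m)`, viewed as a real number. -/
noncomputable def rho (m n : ℕ) : ℝ :=
  sSup {x : ℝ | ∃ c d : ℕ, c ∣ m ∧ d ∣ n ∧ x = (d : ℝ) / (c : ℝ) ∧
    x ≤ Real.sqrt ((n : ℝ) / (m : ℝ))}

/-- Every element of the support of a product factors through the supports of the factors. -/
theorem exists_of_mul_ne_zero [CommRing R] {g h : ArithmeticFunction R} {k : ℕ}
    (hk : (g * h) k ≠ 0) : ∃ i j : ℕ, i * j = k ∧ g i ≠ 0 ∧ h j ≠ 0 := by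
  rw [ArithmeticFunction.mul_apply] at hk
  obtain ⟨⟨i, j⟩, hx, hne⟩ := Finset.exists_ne_zero_of_sum_ne_zero hk
  exact ⟨i, j, (Nat.mem_divisorsAntidiagonal.1 hx).1, left_ne_zero_of_mul hne,
    right_ne_zero_of_mul hne⟩

/-- If `b * d` has only one factorization through the supports of `g` and `h`, no cancellation
can occur in the coefficient of `g * h` at `b * d`. -/
theorem mul_apply_ne_zero [CommRing R] [IsDomain R] {g h : ArithmeticFunction R} {b d : ℕ}
    (hb : g b ≠ 0) (hd : h d ≠ 0)
    (huniq : ∀ i j : ℕ, g i ≠ 0 → h j ≠ 0 → i * j = b * d → i = b ∧ j = d) :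
    (g * h) (b * d) ≠ 0 := by
  have hb0 : b ≠ 0 := by rintro rfl; simp at hb
  have hd0 : d ≠ 0 := by rintro rfl; simp at hd
  rw [ArithmeticFunction.mul_apply, Finset.sum_eq_single (b, d)]
  · exact mul_ne_zero hb hd
  · rintro ⟨i, j⟩ hx hne
    by_contra hprod
    obtain ⟨rfl, rfl⟩ := huniq i j (left_ne_zero_of_mul hprod) (right_ne_zero_of_mul hprod)
      (Nat.mem_divisorsAntidiagonal.1 hx).1
    exact hne rfl
  · intro hx
    exact absurd (Nat.mem_divisorsAntidiagonal.2 ⟨rfl, Nat.mul_ne_zero hb0 hd0⟩) hx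

/-- The degree is multiplicative. -/
theorem deg_mul [CommRing R] [IsDomain R] {g h : ArithmeticFunction R} {b d n : ℕ}
    (hb : g b ≠ 0) (hb' : ∀ i, g i ≠ 0 → i ≤ b) (hd : h d ≠ 0) (hd' : ∀ i, h i ≠ 0 → i ≤ d)
    (hn : (g * h) n ≠ 0) (hn' : ∀ i, n < i → (g * h) i = 0) : n = b * d := by
  apply le_antisymm
  · obtain ⟨i, j, rfl, hi, hj⟩ := exists_of_mul_ne_zero hn
    exact Nat.mul_le_mul (hb' i hi) (hd' j hj)
  · by_contra hlt
    refine mul_apply_ne_zero hb hd ?_ (hn' _ (not_le.1 hlt))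
    intro i j hi hj hij
    have hi0 : i ≠ 0 := by rintro rfl; simp at hi
    have hd0 : d ≠ 0 := by rintro rfl; simp at hd
    exact (mul_eq_mul_iff_eq_and_eq_of_pos (hb' i hi) (hd' j hj)
      (Nat.pos_of_ne_zero hi0) (Nat.pos_of_ne_zero hd0)).1 hij

/-- The min-degree is multiplicative. -/
theorem minDeg_mul [CommRing R] [IsDomain R] {g h : ArithmeticFunction R} {a c m : ℕ}
    (ha : g a ≠ 0) (ha' : ∀ i, g i ≠ 0 → a ≤ i) (hc : h c ≠ 0) (hc' : ∀ i, h i ≠ 0 → c ≤ i)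
    (hm : (g * h) m ≠ 0) (hm' : ∀ i, i < m → (g * h) i = 0) : m = a * c := by
  apply le_antisymm
  · by_contra hlt
    refine mul_apply_ne_zero ha hc ?_ (hm' _ (not_le.1 hlt))
    intro i j hi hj hij
    have ha0 : a ≠ 0 := by rintro rfl; simp at ha
    have hj0 : j ≠ 0 := by rintro rfl; simp at hj
    obtain ⟨h1, h2⟩ := (mul_eq_mul_iff_eq_and_eq_of_pos (ha' i hi) (hc' j hj)
      (Nat.pos_of_ne_zero ha0) (Nat.pos_of_ne_zero hj0)).1 hij.symm
    exact ⟨h1.symm, h2.symm⟩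
  · obtain ⟨i, j, rfl, hi, hj⟩ := exists_of_mul_ne_zero hm
    exact Nat.mul_le_mul (ha' i hi) (hc' j hj)

/-- A nonconstant Dirichlet polynomial has a min-degree and a degree. -/
theorem exists_minDeg_deg [Zero R] {g : ArithmeticFunction R} (hg : IsDP g) (hg' : Nonconst g) :
    ∃ a b : ℕ, g a ≠ 0 ∧ (∀ i, g i ≠ 0 → a ≤ i) ∧ g b ≠ 0 ∧ (∀ i, g i ≠ 0 → i ≤ b) := by
  obtain ⟨k, -, hk⟩ := hg'
  obtain ⟨a, ha, ha'⟩ := Set.exists_min_image _ id hg ⟨k, hk⟩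
  obtain ⟨b, hb, hb'⟩ := Set.exists_max_image _ id hg ⟨k, hk⟩
  exact ⟨a, b, ha, ha', hb, hb'⟩

/-- A factor of a primitive `g * h` with min-degree `a` and support bounded by `b`, where `a ∣ m`,
`b ∣ n` and `b / a ≤ √(n / m)`, is
constant when `ρ(m, n) = 1`. -/
theorem not_nonconst_of_le_sqrt [CommRing R] {g h : ArithmeticFunction R} {a b m n : ℕ}
    (hprim : AlgPrimitive (g * h)) (hrho : rho m n = 1)
    (ha : g a ≠ 0) (ha' : ∀ i, g i ≠ 0 → a ≤ i) (hb' : ∀ i, g i ≠ 0 → i ≤ b)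
    (ham : a ∣ m) (hbn : b ∣ n) (hle : (b : ℝ) / a ≤ Real.sqrt ((n : ℝ) / m)) :
    ¬ Nonconst g := by
  have ha0 : a ≠ 0 := by rintro rfl; simp at ha
  have hle1 : (b : ℝ) / a ≤ 1 := by
    rw [← hrho]
    refine le_csSup ⟨Real.sqrt ((n : ℝ) / m), ?_⟩ ⟨a, b, ham, hbn, rfl, hle⟩
    rintro x ⟨_, _, _, _, _, hx⟩
    exact hx
  have hba : b ≤ a := by
    rw [div_le_one (by positivity)] at hle1
    exact_mod_cast hle1
  have hsupp : ∀ i, g i ≠ 0 → i = a := fun i hi => le_antisymm ((hb' i hi).trans hba) (ha' i hi)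
  have ha1 : a = 1 := by
    refine hprim a fun k hk => ?_
    obtain ⟨i, j, rfl, hi, -⟩ := exists_of_mul_ne_zero hk
    exact hsupp i hi ▸ dvd_mul_right i j
  rintro ⟨i, hi2, hi⟩
  have := hsupp i hi
  omega

/-- An algebraically primitive Dirichlet polynomial with min-degree `m`
and degree `n` satisfying `ρ(m,n) = 1` is irreducible. -/
theorem rho_eq_one_irreducible
    [CommRing R] [IsDomain R] [UniqueFactorizationMonoid R]
    (f : ArithmeticFunction R) (hfin : IsDP f) (hprim : AlgPrimitive f)
    (m n : ℕ) (hmn : m < n)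
    (hmin : f m ≠ 0) (hmin' : ∀ i : ℕ, i < m → f i = 0)
    (hdeg : f n ≠ 0) (hdeg' : ∀ i : ℕ, n < i → f i = 0)
    (hrho : rho m n = 1) :
    IrreducibleDP f := by
  rintro ⟨g, h, hg, hh, hgn, hhn, rfl⟩
  obtain ⟨a, b, ha, ha', hb, hb'⟩ := exists_minDeg_deg hg hgn
  obtain ⟨c, d, hc, hc', hd, hd'⟩ := exists_minDeg_deg hh hhn
  have hm : m = a * c := minDeg_mul ha ha' hc hc' hmin hmin'
  have hn : n = b * d := deg_mul hb hb' hd hd' hdeg hdeg'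
  have hprod : (b : ℝ) / a * ((d : ℝ) / c) = (n : ℝ) / m := by
    rw [hm, hn, div_mul_div_comm]
    push_cast
    rfl
  rcases le_or_gt ((b : ℝ) / a) (Real.sqrt ((n : ℝ) / m)) with hle | hgt
  · exact not_nonconst_of_le_sqrt hprim hrho ha ha' hb' (hm ▸ dvd_mul_right a c)
      (hn ▸ dvd_mul_right b d) hle hgn
  · have hle : (d : ℝ) / c ≤ Real.sqrt ((n : ℝ) / m) := by
      by_contra! hgt'
      have hlt := mul_lt_mul'' hgt hgt' (Real.sqrt_nonneg _) (Real.sqrt_nonneg _)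
      rw [Real.mul_self_sqrt (by positivity), hprod] at hlt
      exact lt_irrefl _ hlt
    rw [mul_comm g h] at hprim
    exact not_nonconst_of_le_sqrt hprim hrho hc hc' hd' (hm ▸ dvd_mul_left c a)
      (hn ▸ dvd_mul_left d b) hle hhn

end DirichletPoly
end

section
/- Let x₁ < x₂ be positive integers and let y₁ ≠ y₂ be integers, and set δ = gcd of |y₂ − y₁| together with all the numbers |ν_p(x₂) − ν_p(x₁)| for prime numbers p dividing x₁·x₂. Then for every i ∈ {0,…,δ} the real number x₁^{(δ−i)/δ}·x₂^{i/δ} is a positive integer and ((δ−i)·y₁ + i·y₂)/δ is an integer, and the set of log-integral points lying on the closed segment in ℝ² joining (log x₁, y₁) and (log x₂, y₂) is exactly { ( log(x₁^{(δ−i)/δ}·x₂^{i/δ}), ((δ−i)·y₁ + i·y₂)/δ ) : i = 0,…,δ }; in particular this segment contains exactly δ + 1 log-integral points. -/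
/-!
A point of the segment with parameter `t ∈ [0, 1]` is `(log (x₁ ^ (1 - t) * x₂ ^ t), y₁ + t (y₂ - y₁))`.

If `t = i / δ`, the second coordinate is an integer because `δ ∣ y₂ - y₁`, and
`x₁ ^ (δ - i) * x₂ ^ i` is a `δ`-th power because each of its valuations
`δ ν_p(x₁) + i (ν_p(x₂) - ν_p(x₁))` is divisible by `δ` (`exists_pow_eq_mul_pow`).

Conversely, a log-integral point `(log x, y)` on the segment has the rational parameter `t = a / b`
with `a = |y - y₁|` and `b = |y₂ - y₁|`, so that `x ^ b = x₁ ^ (b - a) * x₂ ^ a`. Comparing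
valuations, `b` divides `a (ν_p(x₂) - ν_p(x₁))` for every `p`, and `b ∣ a b` trivially; hence
`b ∣ a δ` (`dvd_mul_gcd_of_pow_eq`), that is, `t` is a multiple of `1 / δ`. The points for different
`i` are distinct since their second coordinates are.
-/

/-- A point of `ℝ²` is log-integral if it has the form `(log x, y)` with `x` a positive
integer and `y` an integer. -/
def LogIntegralPt (P : ℝ × ℝ) : Prop :=
  ∃ (x : ℕ) (y : ℤ), 0 < x ∧ P.1 = Real.log x ∧ P.2 = (y : ℝ)

/-- The gcd only ranges over primes dividing `x₁ * x₂`; at all other `p` both valuations vanish, so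
the divisibility holds for every `p`. -/
lemma dvd_factorization_sub {x₁ x₂ : ℕ} (hx₁ : 0 < x₁) (hx₂ : 0 < x₂) {d : ℕ}
    (hd : d ∣ Finset.gcd (x₁ * x₂).primeFactors
        (fun p => ((x₂.factorization p : ℤ) - (x₁.factorization p : ℤ)).natAbs)) (p : ℕ) :
    (d : ℤ) ∣ (x₂.factorization p : ℤ) - (x₁.factorization p : ℤ) := by
  by_cases hp : p ∈ (x₁ * x₂).primeFactors
  · exact Int.natCast_dvd.2 (hd.trans (Finset.gcd_dvd hp))
  · rw [Nat.primeFactors_mul hx₁.ne' hx₂.ne', Finset.mem_union, not_or] at hp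
    rw [← Nat.support_factorization, ← Nat.support_factorization, Finsupp.notMem_support_iff,
      Finsupp.notMem_support_iff] at hp
    simp [hp.1, hp.2]

/-- If `d` divides all differences of valuations, then `x₁ ^ (d - i) * x₂ ^ i` is a `d`-th power. -/
lemma exists_pow_eq_mul_pow {x₁ x₂ d i : ℕ} (hx₁ : 0 < x₁) (hx₂ : 0 < x₂) (hd : 0 < d)
    (hi : i ≤ d)
    (h : ∀ p, (d : ℤ) ∣ (x₂.factorization p : ℤ) - (x₁.factorization p : ℤ)) :
    ∃ z : ℕ, 0 < z ∧ z ^ d = x₁ ^ (d - i) * x₂ ^ i := by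
  have hN : x₁ ^ (d - i) * x₂ ^ i ≠ 0 := by positivity
  have hz : Nat.floorRoot d (x₁ ^ (d - i) * x₂ ^ i) ≠ 0 := Nat.floorRoot_ne_zero.2 ⟨hd.ne', hN⟩
  refine ⟨_, Nat.pos_of_ne_zero hz, Nat.eq_of_factorization_eq (pow_ne_zero _ hz) hN fun p => ?_⟩
  rw [Nat.factorization_pow, Nat.factorization_floorRoot]
  simp only [Finsupp.smul_apply, Finsupp.floorDiv_apply, smul_eq_mul, Nat.floorDiv_eq_div]
  apply Nat.mul_div_cancel'
  rw [Nat.factorization_mul (by positivity) (by positivity), Nat.factorization_pow,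
    Nat.factorization_pow]
  simp only [Finsupp.add_apply, Finsupp.smul_apply, smul_eq_mul]
  obtain ⟨c, hc⟩ := h p
  rw [← Int.natCast_dvd_natCast]
  refine ⟨x₁.factorization p + i * c, ?_⟩
  push_cast [Nat.cast_sub hi]
  linear_combination (i : ℤ) * hc

/-- A rational relation `x ^ b = x₁ ^ (b - a) * x₂ ^ a` forces `a / b` to have denominator dividing
the gcd of `b` and of the differences of valuations. -/
lemma dvd_mul_gcd_of_pow_eq {x x₁ x₂ a b : ℕ} (hx₁ : 0 < x₁) (hx₂ : 0 < x₂)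
    (hab : a ≤ b) (h : x ^ b = x₁ ^ (b - a) * x₂ ^ a) :
    b ∣ a * Nat.gcd b (Finset.gcd (x₁ * x₂).primeFactors
        (fun p => ((x₂.factorization p : ℤ) - (x₁.factorization p : ℤ)).natAbs)) := by
  rw [← Nat.gcd_mul_left]
  refine Nat.dvd_gcd (dvd_mul_left _ _) ?_
  have hm : a * Finset.gcd (x₁ * x₂).primeFactors
      (fun p => ((x₂.factorization p : ℤ) - (x₁.factorization p : ℤ)).natAbs) =
      Finset.gcd (x₁ * x₂).primeFactors
      (fun p => a * ((x₂.factorization p : ℤ) - (x₁.factorization p : ℤ)).natAbs) := by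
    simp [Finset.gcd_mul_left]
  rw [hm]
  refine Finset.dvd_gcd fun p _ => ?_
  have hv := congrArg (fun n => n.factorization p) h
  simp only [Nat.factorization_mul (pow_pos hx₁ _).ne' (pow_pos hx₂ _).ne', Nat.factorization_pow,
    Finsupp.add_apply, Finsupp.smul_apply, smul_eq_mul] at hv
  have hv' : (b : ℤ) * x.factorization p =
      ((b : ℤ) - a) * x₁.factorization p + a * x₂.factorization p := by
    rw [← Nat.cast_sub hab]
    exact_mod_cast hv
  have : (b : ℤ) ∣ (a : ℤ) * ((x₂.factorization p : ℤ) - x₁.factorization p) :=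
    ⟨x.factorization p - x₁.factorization p, by linear_combination -hv'⟩
  simpa [Int.natAbs_mul] using Int.natCast_dvd.1 this

/-- Description of the log-integral points on the closed segment joining
`(log x₁, y₁)` and `(log x₂, y₂)`: they are the points
`(log (x₁^{(δ-i)/δ} x₂^{i/δ}), ((δ-i)y₁ + iy₂)/δ)` for `i = 0, …, δ`, where `δ` is the gcd
of `|y₂ - y₁|` and of the `|ν_p(x₂) - ν_p(x₁)|` over primes `p ∣ x₁·x₂`; in particular
there are exactly `δ + 1` of them. -/
theorem logIntegral_points_on_segment
    (x₁ x₂ : ℕ) (hx₁ : 0 < x₁) (hx : x₁ < x₂) (y₁ y₂ : ℤ) (hy : y₁ ≠ y₂)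
    (δ : ℕ)
    (hδ : δ = Nat.gcd (y₂ - y₁).natAbs
      (Finset.gcd (x₁ * x₂).primeFactors
        (fun p => ((x₂.factorization p : ℤ) - (x₁.factorization p : ℤ)).natAbs))) :
    (∀ i : ℕ, i ≤ δ →
        (∃ z : ℕ, 0 < z ∧
          (z : ℝ) = (x₁ : ℝ) ^ (((δ : ℝ) - (i : ℝ)) / (δ : ℝ)) *
            (x₂ : ℝ) ^ ((i : ℝ) / (δ : ℝ))) ∧
        (δ : ℤ) ∣ ((δ : ℤ) - (i : ℤ)) * y₁ + (i : ℤ) * y₂) ∧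
    {P : ℝ × ℝ | P ∈ segment ℝ (Real.log x₁, (y₁ : ℝ)) (Real.log x₂, (y₂ : ℝ)) ∧
        LogIntegralPt P} =
      (fun i : ℕ =>
        ((Real.log ((x₁ : ℝ) ^ (((δ : ℝ) - (i : ℝ)) / (δ : ℝ)) *
            (x₂ : ℝ) ^ ((i : ℝ) / (δ : ℝ))),
          ((((δ : ℤ) - (i : ℤ)) * y₁ + (i : ℤ) * y₂ : ℤ) : ℝ) / (δ : ℝ)) : ℝ × ℝ)) ''
        Set.Iic δ ∧
    {P : ℝ × ℝ | P ∈ segment ℝ (Real.log x₁, (y₁ : ℝ)) (Real.log x₂, (y₂ : ℝ)) ∧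
        LogIntegralPt P}.ncard = δ + 1 := by
  have hx₂ : 0 < x₂ := hx₁.trans hx
  have hX₁ : (0 : ℝ) < x₁ := by exact_mod_cast hx₁
  have hX₂ : (0 : ℝ) < x₂ := by exact_mod_cast hx₂
  have hδ0 : 0 < δ := by
    rw [hδ]
    exact Nat.gcd_pos_of_pos_left _ (Int.natAbs_pos.2 (sub_ne_zero.2 hy.symm))
  have hδR : (0 : ℝ) < δ := by exact_mod_cast hδ0
  have hδy : (δ : ℤ) ∣ y₂ - y₁ := by
    rw [hδ]
    exact Int.natCast_dvd.2 (Nat.gcd_dvd_left _ _)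
  have hδv := dvd_factorization_sub hx₁ hx₂ (d := δ) (hδ ▸ Nat.gcd_dvd_right _ _)
  have hyR : (y₂ : ℝ) - y₁ ≠ 0 := by
    rw [sub_ne_zero]
    exact_mod_cast hy.symm
  have hlog : ∀ i : ℕ, Real.log ((x₁ : ℝ) ^ (((δ : ℝ) - (i : ℝ)) / (δ : ℝ)) *
      (x₂ : ℝ) ^ ((i : ℝ) / (δ : ℝ))) =
      ((δ : ℝ) - i) / δ * Real.log x₁ + (i : ℝ) / δ * Real.log x₂ := by
    intro i
    rw [Real.log_mul (by positivity) (by positivity), Real.log_rpow hX₁, Real.log_rpow hX₂]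
  have h1 : ∀ i : ℕ, i ≤ δ →
      (∃ z : ℕ, 0 < z ∧
        (z : ℝ) = (x₁ : ℝ) ^ (((δ : ℝ) - (i : ℝ)) / (δ : ℝ)) *
          (x₂ : ℝ) ^ ((i : ℝ) / (δ : ℝ))) ∧
      (δ : ℤ) ∣ ((δ : ℤ) - (i : ℤ)) * y₁ + (i : ℤ) * y₂ := by
    intro i hi
    refine ⟨?_, ?_⟩
    · obtain ⟨z, hz0, hz⟩ := exists_pow_eq_mul_pow hx₁ hx₂ hδ0 hi hδv
      have hZ : (0 : ℝ) < z := by exact_mod_cast hz0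
      refine ⟨z, hz0, Real.log_injOn_pos hZ
        (Set.mem_Ioi.2 (by positivity)) ?_⟩
      rw [hlog]
      have hz' : (z : ℝ) ^ δ = (x₁ : ℝ) ^ (δ - i) * (x₂ : ℝ) ^ i := by exact_mod_cast hz
      have hl := congrArg Real.log hz'
      rw [Real.log_mul (by positivity) (by positivity), Real.log_pow, Real.log_pow, Real.log_pow,
        Nat.cast_sub hi] at hl
      field_simp
      linarith
    · obtain ⟨c, hc⟩ := hδy
      exact ⟨y₁ + i * c, by linear_combination (i : ℤ) * hc⟩
  have h2 : {P : ℝ × ℝ | P ∈ segment ℝ (Real.log x₁, (y₁ : ℝ)) (Real.log x₂, (y₂ : ℝ)) ∧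
        LogIntegralPt P} =
      (fun i : ℕ =>
        ((Real.log ((x₁ : ℝ) ^ (((δ : ℝ) - (i : ℝ)) / (δ : ℝ)) *
            (x₂ : ℝ) ^ ((i : ℝ) / (δ : ℝ))),
          ((((δ : ℤ) - (i : ℤ)) * y₁ + (i : ℤ) * y₂ : ℤ) : ℝ) / (δ : ℝ)) : ℝ × ℝ)) ''
        Set.Iic δ := by
    ext ⟨u, v⟩
    constructor
    · rintro ⟨⟨s, t, hs, ht, hst, heq⟩, x, y, hx0, hu, hv⟩
      simp only [Prod.smul_mk, Prod.mk_add_mk, smul_eq_mul, Prod.mk.injEq] at heq hu hv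
      obtain ⟨hequ, heqv⟩ := heq
      obtain rfl : s = 1 - t := by linarith
      have hX : (0 : ℝ) < x := by exact_mod_cast hx0
      have hty : (y : ℝ) - y₁ = t * ((y₂ : ℝ) - y₁) := by rw [← hv, ← heqv]; ring
      -- Taking absolute values makes the parameter `t = a / b` a quotient of natural numbers.
      have hab : (((y - y₁).natAbs : ℕ) : ℝ) = t * (((y₂ - y₁).natAbs : ℕ) : ℝ) := by
        rw [Nat.cast_natAbs, Nat.cast_natAbs]
        push_cast
        rw [hty, abs_mul, abs_of_nonneg ht]
      have hb0 : 0 < (y₂ - y₁).natAbs := Int.natAbs_pos.2 (sub_ne_zero.2 hy.symm)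
      generalize (y - y₁).natAbs = a at hab
      generalize (y₂ - y₁).natAbs = b at hab hb0 hδ
      have hbR : (0 : ℝ) < b := by exact_mod_cast hb0
      have hle : a ≤ b := by
        have : (a : ℝ) ≤ b := by nlinarith
        exact_mod_cast this
      have hpow : x ^ b = x₁ ^ (b - a) * x₂ ^ a := by
        have : (x : ℝ) ^ b = (x₁ : ℝ) ^ (b - a) * (x₂ : ℝ) ^ a := by
          refine Real.log_injOn_pos (Set.mem_Ioi.2 (by positivity))
            (Set.mem_Ioi.2 (by positivity)) ?_
          rw [Real.log_mul (by positivity) (by positivity), Real.log_pow, Real.log_pow,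
            Real.log_pow, Nat.cast_sub hle, hab, ← hu, ← hequ]
          ring
        exact_mod_cast this
      have hdvd := dvd_mul_gcd_of_pow_eq hx₁ hx₂ hle hpow
      rw [← hδ] at hdvd
      obtain ⟨i, hi⟩ := hdvd
      have hti : (i : ℝ) = t * δ := by
        have : (a : ℝ) * δ = b * i := by exact_mod_cast hi
        rw [hab] at this
        apply mul_left_cancel₀ hbR.ne'
        linarith
      refine ⟨i, Set.mem_Iic.2 ?_, ?_⟩
      · have : (i : ℝ) ≤ δ := by nlinarith
        exact_mod_cast this
      · simp only [Prod.mk.injEq]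
        refine ⟨?_, ?_⟩
        · rw [hlog, hti, ← hequ]
          field_simp
        · push_cast
          rw [hti, ← heqv]
          field_simp
    · rintro ⟨i, hi, heq⟩
      have hi' : i ≤ δ := hi
      have hiR : (i : ℝ) ≤ δ := by exact_mod_cast hi'
      simp only [Prod.mk.injEq] at heq
      obtain ⟨hu, hv⟩ := heq
      obtain ⟨⟨z, hz0, hz⟩, ⟨c, hc⟩⟩ := h1 i hi'
      refine ⟨⟨((δ : ℝ) - i) / δ, (i : ℝ) / δ, div_nonneg (by linarith) hδR.le, by positivity,
        by field_simp; ring, ?_⟩, z, c, hz0, ?_, ?_⟩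
      · simp only [Prod.smul_mk, Prod.mk_add_mk, smul_eq_mul, Prod.mk.injEq]
        refine ⟨by rw [← hu, hlog], ?_⟩
        rw [← hv]
        push_cast
        field_simp
      · simp only [← hu, hz]
      · simp only [← hv, hc]
        push_cast
        field_simp
  refine ⟨h1, h2, ?_⟩
  rw [h2, Set.InjOn.ncard_image]
  · rw [← Finset.coe_Iic, Set.ncard_coe_finset, Nat.card_Iic]
  · intro i _ j _ hij
    have h := congrArg Prod.snd hij
    simp only at h
    rw [div_left_inj' hδR.ne'] at h
    push_cast at h
    have : (i : ℝ) = j := by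
      apply mul_right_cancel₀ hyR
      linarith
    exact_mod_cast this
end

section
/- Let R be a unique factorization domain, f an algebraically primitive Dirichlet polynomial over R with min-degree m and degree n (m < n, a_m = f(m) ≠ 0, a_n = f(n) ≠ 0), write a_i = f(i), and let p be a prime element of R. Assume: (i) ν_p(a_n) ≠ ν_p(a_m); (ii) for every i with m < i < n and a_i ≠ 0 one has (n/i)^{ν_p(a_i) − ν_p(a_m)} > (m/i)^{ν_p(a_i) − ν_p(a_n)} as rational numbers (with integer, possibly negative, exponents); (iii) the gcd of the integer ν_p(a_n) − ν_p(a_m) together with the integers ν_q(n) − ν_q(m) for all prime numbers q dividing m·n equals 1. Then f is irreducible over R. -/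
/-!
The argument is Dumas' Newton-polygon method on the points `(log i, ν_p (a_i))`. Put
`L = log n - log m` and `D = ν_p (a_n) - ν_p (a_m)`, and give a coefficient `a` at index `i` the
weight `ν_p a * L - D * log i`, which is additive under products `(a, i), (b, j) ↦ (a * b, i * j)`.
Hypothesis `h2` says that the weight on the support of `f` is minimal at `m` and at `n`.

Let `f = g * h`, with min-degrees `m₁, m₂` and degrees `n₁, n₂`, so `m = m₁ m₂` and `n = n₁ n₂`.
Multiplying the smallest indices of minimal weight of `g` and `h` gives an index of `f` whose weight
is at most the sum of the two minima (`exists_weight_mul_le`). Since `f m = g m₁ * h m₂` and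
`f n = g n₁ * h n₂` have minimal weight in `f`, the weights of `g` at `m₁` and `n₁` are both minimal,
hence equal. With `D₁ = ν_p (g n₁) - ν_p (g m₁)` this reads
`D₁ * (log n - log m) = D * (log n₁ - log m₁)`, so
`D₁ * (ν_q n - ν_q m) = D * (ν_q n₁ - ν_q m₁)` for every prime `q`, and the gcd condition `h3`
gives `D ∣ D₁`. As `D₁ / D` lies in `[0, 1]`, it is `0` or `1`: one of the factors is supported on a
single index, which then divides the whole support of `f` and equals `1` by algebraic primitivity.
-/

namespace DirichletPoly

variable {R : Type*}

/-- The affine functional whose level lines are parallel to the Newton segment of slope `D / L`,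
evaluated at the point `(log i, ν_p a)`. -/
noncomputable def weight [CommRing R] (p : R) (L D : ℝ) (a : R) (i : ℕ) : ℝ :=
  multiplicity p a * L - D * Real.log i

lemma weight_mul [CommRing R] [IsDomain R] [UniqueFactorizationMonoid R] {p : R} (hp : Prime p)
    (L D : ℝ) {a b : R} (ha : a ≠ 0) (hb : b ≠ 0) {i j : ℕ} (hi : i ≠ 0) (hj : j ≠ 0) :
    weight p L D (a * b) (i * j) = weight p L D a i + weight p L D b j := by
  have hm : multiplicity p (a * b) = multiplicity p a + multiplicity p b :=
    multiplicity_mul hp (FiniteMultiplicity.of_prime_left hp (mul_ne_zero ha hb))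
  unfold weight
  rw [hm, Nat.cast_mul, Real.log_mul (by exact_mod_cast hi) (by exact_mod_cast hj)]
  push_cast
  ring

lemma ne_zero_of_apply_ne_zero [Zero R] {g : ArithmeticFunction R} {i : ℕ} (h : g i ≠ 0) :
    i ≠ 0 := by
  rintro rfl
  exact h g.map_zero

lemma exists_of_mul_apply_ne_zero [CommRing R] {g h : ArithmeticFunction R} {k : ℕ}
    (hk : (g * h) k ≠ 0) : ∃ i j, i * j = k ∧ g i ≠ 0 ∧ h j ≠ 0 := by
  rw [ArithmeticFunction.mul_apply] at hk
  obtain ⟨x, hx, hne⟩ := Finset.exists_ne_zero_of_sum_ne_zero hk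
  exact ⟨x.1, x.2, (Nat.mem_divisorsAntidiagonal.mp hx).1, left_ne_zero_of_mul hne,
    right_ne_zero_of_mul hne⟩

lemma mul_apply_eq_of_unique [CommRing R] [IsDomain R] {g h : ArithmeticFunction R} {a b : ℕ}
    (ha : g a ≠ 0) (hb : h b ≠ 0)
    (huniq : ∀ i j, i * j = a * b → g i ≠ 0 → h j ≠ 0 → i = a ∧ j = b) :
    (g * h) (a * b) = g a * h b := by
  rw [ArithmeticFunction.mul_apply]
  refine Finset.sum_eq_single (a, b) ?_ ?_
  · intro x hx hne
    by_contra hc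
    have := huniq x.1 x.2 (Nat.mem_divisorsAntidiagonal.mp hx).1 (left_ne_zero_of_mul hc)
      (right_ne_zero_of_mul hc)
    exact hne (Prod.ext this.1 this.2)
  · intro hc
    exact absurd (Nat.mem_divisorsAntidiagonal.mpr ⟨rfl, mul_ne_zero
      (ne_zero_of_apply_ne_zero ha) (ne_zero_of_apply_ne_zero hb)⟩) hc

/-- Among the support points of minimal weight there is one of smallest index. -/
lemma exists_min_weight [CommRing R] (p : R) (L D : ℝ) {g : ArithmeticFunction R} (hg : IsDP g)
    (hne : ∃ i, g i ≠ 0) :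
    ∃ i, g i ≠ 0 ∧ (∀ j, g j ≠ 0 → weight p L D (g i) i ≤ weight p L D (g j) j) ∧
      ∀ j, g j ≠ 0 → weight p L D (g j) j = weight p L D (g i) i → i ≤ j := by
  have hS : ∀ i, i ∈ hg.toFinset ↔ g i ≠ 0 := fun i => hg.mem_toFinset
  obtain ⟨k, hk⟩ := hne
  obtain ⟨i, hi, hmin⟩ := Finset.exists_min_image hg.toFinset
    (fun i => toLex (weight p L D (g i) i, i)) ⟨k, (hS k).2 hk⟩
  refine ⟨i, (hS i).1 hi, fun j hj => ?_, fun j hj he => ?_⟩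
  · rcases Prod.Lex.toLex_le_toLex.mp (hmin j ((hS j).2 hj)) with h | h
    exacts [h.le, h.1.le]
  · rcases Prod.Lex.toLex_le_toLex.mp (hmin j ((hS j).2 hj)) with h | h
    exacts [absurd he h.ne', h.2]

/-- The minimal weight of a product is at most the sum of the minimal weights of the factors. At the
product of the smallest indices of minimal weight, one term of the convolution has strictly smaller
`p`-adic valuation than all the others, so no cancellation modulo higher powers of `p` occurs. -/
lemma exists_weight_mul_le [CommRing R] [IsDomain R] [UniqueFactorizationMonoid R] {p : R}
    (hp : Prime p) {L : ℝ} (hL : 0 < L) (D : ℝ) {g h : ArithmeticFunction R}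
    (hg : IsDP g) (hh : IsDP h) (hg0 : ∃ i, g i ≠ 0) (hh0 : ∃ i, h i ≠ 0) :
    ∃ k, (g * h) k ≠ 0 ∧ ∀ i j, g i ≠ 0 → h j ≠ 0 →
      weight p L D ((g * h) k) k ≤ weight p L D (g i) i + weight p L D (h j) j := by
  obtain ⟨a, ha, hamin, hafst⟩ := exists_min_weight p L D hg hg0
  obtain ⟨b, hb, hbmin, hbfst⟩ := exists_min_weight p L D hh hh0
  have ha0 := ne_zero_of_apply_ne_zero ha
  have hb0 := ne_zero_of_apply_ne_zero hb
  have hab := mul_ne_zero ha hb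
  have hmem : (a, b) ∈ (a * b).divisorsAntidiagonal :=
    Nat.mem_divisorsAntidiagonal.mpr ⟨rfl, mul_ne_zero ha0 hb0⟩
  have hother : p ^ (multiplicity p (g a * h b) + 1) ∣
      ∑ x ∈ (a * b).divisorsAntidiagonal.erase (a, b), g x.1 * h x.2 := by
    refine Finset.dvd_sum fun x hx => ?_
    obtain ⟨hxne, hx⟩ := Finset.mem_erase.mp hx
    obtain ⟨i, j⟩ := x
    have hij : i * j = a * b := (Nat.mem_divisorsAntidiagonal.mp hx).1
    dsimp only
    by_cases hgi : g i = 0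
    · simp [hgi]
    by_cases hhj : h j = 0
    · simp [hhj]
    have h1 := hamin i hgi
    have h2 := hbmin j hhj
    have hlt : weight p L D (g a * h b) (a * b) < weight p L D (g i * h j) (i * j) := by
      rw [weight_mul hp L D ha hb ha0 hb0, weight_mul hp L D hgi hhj
        (ne_zero_of_apply_ne_zero hgi) (ne_zero_of_apply_ne_zero hhj)]
      by_contra hc
      have e1 : weight p L D (g i) i = weight p L D (g a) a := by linarith
      have e2 : weight p L D (h j) j = weight p L D (h b) b := by linarith
      have l1 := hafst i hgi e1
      have l2 := hbfst j hhj e2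
      have hi : i = a := by
        by_contra hne
        have : a * b < i * j := Nat.mul_lt_mul_of_lt_of_le
          (lt_of_le_of_ne l1 (Ne.symm hne)) l2
          (Nat.pos_of_ne_zero (ne_zero_of_apply_ne_zero hhj))
        omega
      subst hi
      exact hxne (Prod.ext rfl (Nat.eq_of_mul_eq_mul_left (Nat.pos_of_ne_zero ha0) hij))
    unfold weight at hlt
    rw [hij] at hlt
    have hlt' : (multiplicity p (g a * h b) : ℝ) < multiplicity p (g i * h j) :=
      lt_of_mul_lt_mul_right (by linarith) hL.le
    exact pow_dvd_of_le_multiplicity (by exact_mod_cast hlt')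
  have hsum : (g * h) (a * b) = g a * h b +
      ∑ x ∈ (a * b).divisorsAntidiagonal.erase (a, b), g x.1 * h x.2 := by
    rw [ArithmeticFunction.mul_apply, ← Finset.add_sum_erase _ _ hmem]
  have hnd : ¬ p ^ (multiplicity p (g a * h b) + 1) ∣ (g * h) (a * b) := by
    rw [hsum, dvd_add_left hother]
    exact (FiniteMultiplicity.of_prime_left hp hab).not_pow_dvd_of_multiplicity_lt
      (Nat.lt_succ_self _)
  have hne : (g * h) (a * b) ≠ 0 := fun h0 => hnd (h0 ▸ dvd_zero _)
  refine ⟨a * b, hne, fun i j hgi hhj => ?_⟩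
  have hle : multiplicity p ((g * h) (a * b)) ≤ multiplicity p (g a * h b) :=
    Nat.lt_succ_iff.mp
      ((FiniteMultiplicity.of_prime_left hp hne).multiplicity_lt_iff_not_dvd.mpr hnd)
  have hle' : weight p L D ((g * h) (a * b)) (a * b) ≤ weight p L D (g a * h b) (a * b) := by
    unfold weight
    have : (multiplicity p ((g * h) (a * b)) : ℝ) ≤ multiplicity p (g a * h b) := by
      exact_mod_cast hle
    have := mul_le_mul_of_nonneg_right this hL.le
    linarith
  rw [weight_mul hp L D ha hb ha0 hb0] at hle'
  linarith [hamin i hgi, hbmin j hhj]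

lemma exists_min_max_support [CommRing R] {g : ArithmeticFunction R} (hg : IsDP g)
    (hne : ∃ i, g i ≠ 0) :
    ∃ a b, g a ≠ 0 ∧ g b ≠ 0 ∧ ∀ i, g i ≠ 0 → a ≤ i ∧ i ≤ b := by
  have hS : ∀ i, i ∈ hg.toFinset ↔ g i ≠ 0 := fun i => hg.mem_toFinset
  obtain ⟨k, hk⟩ := hne
  obtain ⟨a, ha, hamin⟩ := Finset.exists_min_image hg.toFinset id ⟨k, (hS k).2 hk⟩
  obtain ⟨b, hb, hbmax⟩ := Finset.exists_max_image hg.toFinset id ⟨k, (hS k).2 hk⟩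
  exact ⟨a, b, (hS a).1 ha, (hS b).1 hb,
    fun i hi => ⟨hamin i ((hS i).2 hi), hbmax i ((hS i).2 hi)⟩⟩

/-- An integral linear relation between `log (n / m)` and `log (n₁ / m₁)` holds prime by prime, by
unique factorization of rationals. -/
lemma factorization_of_log {m n m₁ n₁ : ℕ} (hm : m ≠ 0) (hn : n ≠ 0) (hm₁ : m₁ ≠ 0)
    (hn₁ : n₁ ≠ 0) {D D₁ : ℤ}
    (h : (D₁ : ℝ) * (Real.log n - Real.log m) = D * (Real.log n₁ - Real.log m₁))
    {q : ℕ} (hq : q.Prime) :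
    D₁ * ((n.factorization q : ℤ) - m.factorization q) =
      D * ((n₁.factorization q : ℤ) - m₁.factorization q) := by
  have : Fact q.Prime := ⟨hq⟩
  have hmR : (m : ℝ) ≠ 0 := by exact_mod_cast hm
  have hnR : (n : ℝ) ≠ 0 := by exact_mod_cast hn
  have hmR₁ : (m₁ : ℝ) ≠ 0 := by exact_mod_cast hm₁
  have hnR₁ : (n₁ : ℝ) ≠ 0 := by exact_mod_cast hn₁
  have hmQ : (m : ℚ) ≠ 0 := by exact_mod_cast hm
  have hnQ : (n : ℚ) ≠ 0 := by exact_mod_cast hn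
  have hmQ₁ : (m₁ : ℚ) ≠ 0 := by exact_mod_cast hm₁
  have hnQ₁ : (n₁ : ℚ) ≠ 0 := by exact_mod_cast hn₁
  have hR : ((n : ℝ) / m) ^ D₁ = ((n₁ : ℝ) / m₁) ^ D := by
    apply Real.log_injOn_pos
    · exact Set.mem_Ioi.mpr (by positivity)
    · exact Set.mem_Ioi.mpr (by positivity)
    · rw [Real.log_zpow, Real.log_zpow, Real.log_div hnR hmR, Real.log_div hnR₁ hmR₁, h]
  have hQ : ((n : ℚ) / m) ^ D₁ = ((n₁ : ℚ) / m₁) ^ D := by exact_mod_cast hR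
  have := congrArg (padicValRat q) hQ
  rw [padicValRat.zpow, padicValRat.zpow, padicValRat.div hnQ hmQ, padicValRat.div hnQ₁ hmQ₁] at this
  simpa [Nat.factorization_def _ hq] using this

/-- If `D` divides `D₁ * e` for every `e` in `E`, and `D` together with `E` has gcd `1`, then `D`
divides `D₁`. -/
lemma dvd_of_gcd_eq_one {D D₁ : ℤ} (hD : D ≠ 0) {E : Set ℤ} (hE : ∀ e ∈ E, D ∣ D₁ * e)
    (hgcd : ∀ d : ℕ, (d : ℤ) ∣ D → (∀ e ∈ E, (d : ℤ) ∣ e) → d = 1) : D ∣ D₁ := by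
  obtain ⟨a, b, hab, ha, hb⟩ := Int.exists_gcd_one (Int.gcd_pos_of_ne_zero_left D₁ hD)
  have hc : (Int.gcd D D₁ : ℤ) ≠ 0 := by
    exact_mod_cast (Int.gcd_pos_of_ne_zero_left D₁ hD).ne'
  have h1 : a.natAbs = 1 := by
    refine hgcd _ (Int.natAbs_dvd.mpr ⟨_, ha⟩) fun e he => Int.natAbs_dvd.mpr ?_
    have h2 : a * (Int.gcd D D₁ : ℤ) ∣ (b * e) * (Int.gcd D D₁ : ℤ) := by
      rw [← ha, mul_right_comm, ← hb]
      exact hE e he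
    exact Int.dvd_of_dvd_mul_right_of_gcd_one ((mul_dvd_mul_iff_right hc).mp h2) hab
  have h2 : D ∣ (Int.gcd D D₁ : ℤ) := by
    rcases Int.natAbs_eq_iff.mp h1 with h | h
    · exact ⟨1, by rw [ha, h]; simp⟩
    · exact ⟨-1, by rw [ha, h]; simp⟩
  exact h2.trans (Int.gcd_dvd_right D D₁)

/-- A factor of an algebraically primitive polynomial supported on a single index is constant. -/
lemma not_nonconst_of_single [CommRing R] {g h : ArithmeticFunction R} (hprim : AlgPrimitive (g * h))
    {a : ℕ} (ha : ∀ i, g i ≠ 0 → i = a) : ¬ Nonconst g := by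
  have h1 : a = 1 := hprim a fun k hk => by
    obtain ⟨i, j, hij, hgi, -⟩ := exists_of_mul_apply_ne_zero hk
    exact ⟨j, by rw [← hij, ha i hgi]⟩
  rintro ⟨i, hi, hgi⟩
  have := ha i hgi
  omega

/-- The power inequality, after taking logarithms, places `(log i, x)` strictly above the segment from
`(log m, y)` to `(log n, z)` when `m < n`. -/
lemma log_ineq {m i n : ℕ} (hm : m ≠ 0) (hi : i ≠ 0) (hn : n ≠ 0) {x y z : ℤ}
    (h : ((n : ℚ) / (i : ℚ)) ^ (x - y) > ((m : ℚ) / (i : ℚ)) ^ (x - z)) :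
    ((x : ℝ) - z) * (Real.log m - Real.log i) < ((x : ℝ) - y) * (Real.log n - Real.log i) := by
  have hmR : (m : ℝ) ≠ 0 := by exact_mod_cast hm
  have hnR : (n : ℝ) ≠ 0 := by exact_mod_cast hn
  have hiR : (i : ℝ) ≠ 0 := by exact_mod_cast hi
  have hR : ((m : ℝ) / i) ^ (x - z) < ((n : ℝ) / i) ^ (x - y) := by
    have := (Rat.cast_lt (K := ℝ)).mpr h
    push_cast at this
    exact this
  have := Real.log_lt_log (by positivity) hR
  rw [Real.log_zpow, Real.log_zpow, Real.log_div hnR hiR, Real.log_div hmR hiR] at this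
  push_cast at this
  exact this

/-- Dumas-type criterion for Dirichlet polynomials. Here `ν i` is the
`p`-adic valuation of the coefficient `f i`, characterized by
`p ^ ν i ∣ f i` and `¬ p ^ (ν i + 1) ∣ f i`. -/
theorem dumas_irreducible
    [CommRing R] [IsDomain R] [UniqueFactorizationMonoid R]
    (f : ArithmeticFunction R) (hfin : IsDP f) (hprim : AlgPrimitive f)
    (m n : ℕ) (hmn : m < n)
    (hmin : f m ≠ 0) (hmin' : ∀ i : ℕ, i < m → f i = 0)
    (hdeg : f n ≠ 0) (hdeg' : ∀ i : ℕ, n < i → f i = 0)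
    (p : R) (hp : Prime p)
    (ν : ℕ → ℕ) (hν : ∀ i : ℕ, f i ≠ 0 → p ^ ν i ∣ f i ∧ ¬ p ^ (ν i + 1) ∣ f i)
    (h1 : ν n ≠ ν m)
    (h2 : ∀ i : ℕ, m < i → i < n → f i ≠ 0 →
      ((n : ℚ) / (i : ℚ)) ^ ((ν i : ℤ) - (ν m : ℤ)) >
        ((m : ℚ) / (i : ℚ)) ^ ((ν i : ℤ) - (ν n : ℤ)))
    (h3 : ∀ d : ℕ, ((d : ℤ) ∣ (ν n : ℤ) - (ν m : ℤ) ∧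
      ∀ q ∈ (m * n).primeFactors,
        (d : ℤ) ∣ (n.factorization q : ℤ) - (m.factorization q : ℤ)) → d = 1) :
    IrreducibleDP f := by
  rintro ⟨g, h, hg, hh, hgc, hhc, rfl⟩
  have hm0 : m ≠ 0 := ne_zero_of_apply_ne_zero hmin
  have hn0 : n ≠ 0 := ne_zero_of_apply_ne_zero hdeg
  have hmult : ∀ i, (g * h) i ≠ 0 → multiplicity p ((g * h) i) = ν i := fun i hi =>
    multiplicity_eq_of_dvd_of_not_dvd (hν i hi).1 (hν i hi).2
  have hlog : ∀ {a b : ℕ}, a ≠ 0 → a ≤ b → Real.log a ≤ Real.log b := fun ha hab =>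
    Real.log_le_log (by exact_mod_cast Nat.pos_of_ne_zero ha) (by exact_mod_cast hab)
  have hL : 0 < Real.log n - Real.log m := sub_pos.mpr
    (Real.log_lt_log (by exact_mod_cast Nat.pos_of_ne_zero hm0) (by exact_mod_cast hmn))
  set L : ℝ := Real.log n - Real.log m with hLdef
  set D : ℤ := (ν n : ℤ) - (ν m : ℤ) with hDdef
  have hD0 : D ≠ 0 := by omega
  have hDR : (D : ℝ) = ν n - ν m := by rw [hDdef]; push_cast; rfl
  have hg0 : ∃ i, g i ≠ 0 := hgc.imp fun _ => And.right
  have hh0 : ∃ i, h i ≠ 0 := hhc.imp fun _ => And.right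
  obtain ⟨m₁, n₁, hgm, hgn, hgb⟩ := exists_min_max_support hg hg0
  obtain ⟨m₂, n₂, hhm, hhn, hhb⟩ := exists_min_max_support hh hh0
  have hm₁ := ne_zero_of_apply_ne_zero hgm
  have hn₁ := ne_zero_of_apply_ne_zero hgn
  have hm₂ := ne_zero_of_apply_ne_zero hhm
  have hn₂ := ne_zero_of_apply_ne_zero hhn
  -- The extreme coefficients of `g * h` are products of extreme coefficients of the factors.
  have hfm : (g * h) (m₁ * m₂) = g m₁ * h m₂ := by
    refine mul_apply_eq_of_unique hgm hhm fun i j hij hi hj => ?_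
    have l1 := (hgb i hi).1
    have l2 := (hhb j hj).1
    rcases l1.lt_or_eq with hlt | rfl
    · exact absurd hij (Nat.mul_lt_mul_of_lt_of_le hlt l2
        (Nat.pos_of_ne_zero (ne_zero_of_apply_ne_zero hj))).ne'
    · exact ⟨rfl, Nat.eq_of_mul_eq_mul_left (Nat.pos_of_ne_zero hm₁) hij⟩
  have hfn : (g * h) (n₁ * n₂) = g n₁ * h n₂ := by
    refine mul_apply_eq_of_unique hgn hhn fun i j hij hi hj => ?_
    have l1 := (hgb i hi).2
    have l2 := (hhb j hj).2
    rcases l1.lt_or_eq with hlt | rfl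
    · exact absurd hij (Nat.mul_lt_mul_of_lt_of_le hlt l2 (Nat.pos_of_ne_zero hn₂)).ne
    · exact ⟨rfl, Nat.eq_of_mul_eq_mul_left (Nat.pos_of_ne_zero hn₁) hij⟩
  have hm : m₁ * m₂ = m := by
    apply le_antisymm
    · obtain ⟨i, j, hij, hi, hj⟩ := exists_of_mul_apply_ne_zero hmin
      rw [← hij]
      exact Nat.mul_le_mul (hgb i hi).1 (hhb j hj).1
    · by_contra hc
      exact mul_ne_zero hgm hhm (hfm ▸ hmin' _ (not_le.mp hc))
  have hn : n₁ * n₂ = n := by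
    apply le_antisymm
    · by_contra hc
      exact mul_ne_zero hgn hhn (hfn ▸ hdeg' _ (not_le.mp hc))
    · obtain ⟨i, j, hij, hi, hj⟩ := exists_of_mul_apply_ne_zero hdeg
      rw [← hij]
      exact Nat.mul_le_mul (hgb i hi).2 (hhb j hj).2
  -- The weight on the support of `g * h` is minimal at both `m` and `n`.
  have hwmn : weight p L D ((g * h) n) n = weight p L D ((g * h) m) m := by
    unfold weight
    rw [hmult n hdeg, hmult m hmin, hDR, hLdef]
    ring
  have hwmin : ∀ k, (g * h) k ≠ 0 →
      weight p L D ((g * h) m) m ≤ weight p L D ((g * h) k) k := by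
    intro k hk
    have hk1 : m ≤ k := by
      by_contra hc
      exact hk (hmin' k (not_le.mp hc))
    have hk2 : k ≤ n := by
      by_contra hc
      exact hk (hdeg' k (not_le.mp hc))
    rcases hk1.lt_or_eq with hk1 | rfl
    · rcases hk2.lt_or_eq with hk2 | rfl
      · have := log_ineq hm0 (ne_zero_of_apply_ne_zero hk) hn0 (h2 k hk1 hk2 hk)
        push_cast at this
        unfold weight
        rw [hmult k hk, hmult m hmin, hDR, hLdef]
        nlinarith [this]
      · exact hwmn.ge
    · exact le_rfl
  obtain ⟨k, hk, hkle⟩ := exists_weight_mul_le hp hL D hg hh hg0 hh0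
  have hwk := hwmin k hk
  have hsm : weight p L D ((g * h) m) m = weight p L D (g m₁) m₁ + weight p L D (h m₂) m₂ := by
    rw [← hm, hfm, weight_mul hp L D hgm hhm hm₁ hm₂]
  have hsn : weight p L D ((g * h) m) m = weight p L D (g n₁) n₁ + weight p L D (h n₂) n₂ := by
    rw [← hwmn, ← hn, hfn, weight_mul hp L D hgn hhn hn₁ hn₂]
  -- Mixed pairs `(n₁, m₂)` and `(m₁, n₂)` cannot beat the minimum, so equality holds in each factor.
  have hwg : weight p L D (g n₁) n₁ = weight p L D (g m₁) m₁ := by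
    have e1 := hkle n₁ m₂ hgn hhm
    have e2 := hkle m₁ n₂ hgm hhn
    linarith
  set D₁ : ℤ := (multiplicity p (g n₁) : ℤ) - multiplicity p (g m₁) with hD₁
  have hrel : (D₁ : ℝ) * (Real.log n - Real.log m) = D * (Real.log n₁ - Real.log m₁) := by
    unfold weight at hwg
    rw [hD₁, ← hLdef]
    push_cast
    linarith
  have hdvd : D ∣ D₁ := by
    refine dvd_of_gcd_eq_one hD0
      (E := {e | ∃ q ∈ (m * n).primeFactors, e = (n.factorization q : ℤ) - m.factorization q}) ?_ ?_
    · rintro e ⟨q, hq, rfl⟩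
      exact ⟨_, factorization_of_log hm0 hn0 hm₁ hn₁ hrel (Nat.prime_of_mem_primeFactors hq)⟩
    · intro d hd he
      exact h3 d ⟨hd, fun q hq => he _ ⟨q, hq, rfl⟩⟩
  obtain ⟨c, hc⟩ := hdvd
  have hDR0 : (D : ℝ) ≠ 0 := by exact_mod_cast hD0
  have hcL : (c : ℝ) * L = Real.log n₁ - Real.log m₁ := by
    rw [hc] at hrel
    push_cast at hrel
    exact mul_left_cancel₀ hDR0 (by rw [← hrel]; ring)
  have hsplit : L = (Real.log n₁ - Real.log m₁) + (Real.log n₂ - Real.log m₂) := by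
    rw [hLdef, ← hm, ← hn, Nat.cast_mul, Nat.cast_mul,
      Real.log_mul (by exact_mod_cast hn₁) (by exact_mod_cast hn₂),
      Real.log_mul (by exact_mod_cast hm₁) (by exact_mod_cast hm₂)]
    ring
  have hl1 := hlog hm₁ (hgb n₁ hgn).1
  have hl2 := hlog hm₂ (hhb n₂ hhn).1
  have hinj : ∀ {a b : ℕ}, a ≠ 0 → b ≠ 0 → Real.log a = Real.log b → a = b := by
    intro a b ha hb hab
    exact_mod_cast Real.log_injOn_pos
      (Set.mem_Ioi.mpr (by exact_mod_cast Nat.pos_of_ne_zero ha))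
      (Set.mem_Ioi.mpr (by exact_mod_cast Nat.pos_of_ne_zero hb)) hab
  have hc0 : 0 ≤ c := by
    have : (0 : ℝ) ≤ c := nonneg_of_mul_nonneg_left (by linarith) hL
    exact_mod_cast this
  have hc1 : c ≤ 1 := by
    have : (c : ℝ) ≤ 1 := le_of_mul_le_mul_right (by linarith) hL
    exact_mod_cast this
  have hc01 : c = 0 ∨ c = 1 := by omega
  rcases hc01 with rfl | rfl
  · have : m₁ = n₁ := hinj hm₁ hn₁ (by push_cast at hcL; linarith)
    exact not_nonconst_of_single hprim (a := m₁)
      (fun i hi => by have := hgb i hi; omega) hgc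
  · have : m₂ = n₂ := hinj hm₂ hn₂ (by push_cast at hcL; linarith)
    exact not_nonconst_of_single (mul_comm g h ▸ hprim) (a := m₂)
      (fun i hi => by have := hhb i hi; omega) hhc

end DirichletPoly
end

section
/- Let R be a unique factorization domain and let f be a Dirichlet polynomial over R whose support is exactly {m, n} with m < n and gcd(m,n) = 1, and set a_m = f(m), a_n = f(n). If there exists a prime element p of R such that p ∣ a_m·a_n but p² ∤ a_m·a_n, then f is irreducible over R. -/
/-!
An Eisenstein argument. Suppose `f = g * h`. For a prime ideal `P`, reduction modulo `P` is a
product of Dirichlet polynomials over a domain, so the least index of `f` modulo `P` is the product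
of the least indices of `g` and `h`, and likewise for the greatest indices (`exists_extremes`).

With `P = ⊥` this gives `m = a * c`, `n = b * d`, `f m = g a * h c` and `f n = g b * h d`, where
`a, b` and `c, d` are the extreme indices of `g` and `h`. As `p` divides `f m * f n` exactly once,
it misses both extreme coefficients of one of the factors, say `h c` and `h d`. With `P = (p)`, `f`
is a monomial modulo `p`, hence so is `h`, and therefore `c = d`. This number divides
`gcd(m, n) = 1`, so `c = d = 1` and `h` is constant (`const_of_not_dvd`).
-/


namespace DirichletPoly

variable {R : Type*}

/-- If `(a, b)` is the only pair with product `a * b` that contributes to the convolution modulo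
`P`, then the coefficient of `g * h` at `a * b` is `g a * h b` modulo `P`. -/
theorem mul_apply_sub_mem [CommRing R] (P : Ideal R) (g h : ArithmeticFunction R) {a b : ℕ}
    (hab : a * b ≠ 0)
    (H : ∀ i j : ℕ, i * j = a * b → (i, j) ≠ (a, b) → g i * h j ∈ P) :
    (g * h) (a * b) - g a * h b ∈ P := by
  have hmem : (a, b) ∈ (a * b).divisorsAntidiagonal := by
    simpa [Nat.mem_divisorsAntidiagonal] using hab
  rw [ArithmeticFunction.mul_apply, ← Finset.add_sum_erase _ _ hmem, add_sub_cancel_left]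
  refine P.sum_mem ?_
  rintro ⟨i, j⟩ hij
  rw [Finset.mem_erase, Nat.mem_divisorsAntidiagonal] at hij
  exact H i j hij.2.1 hij.1

theorem exists_of_mul_apply_notMem [CommRing R] (P : Ideal R) (g h : ArithmeticFunction R) {k : ℕ}
    (hk : (g * h) k ∉ P) : ∃ i j, i * j = k ∧ g i ∉ P ∧ h j ∉ P := by
  contrapose! hk
  rw [ArithmeticFunction.mul_apply]
  refine P.sum_mem ?_
  rintro ⟨i, j⟩ hij
  rw [Nat.mem_divisorsAntidiagonal] at hij
  by_cases hi : g i ∈ P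
  · exact P.mul_mem_right _ hi
  · exact P.mul_mem_left _ (hk i j hij.1 hi)

theorem exists_min_max_s7 [CommRing R] (P : Ideal R) {g : ArithmeticFunction R} (hg : IsDP g)
    {i₀ : ℕ} (hi₀ : g i₀ ∉ P) :
    ∃ a b, 0 < a ∧ g a ∉ P ∧ g b ∉ P ∧ ∀ i, g i ∉ P → a ≤ i ∧ i ≤ b := by
  have hfin : {i | g i ∉ P}.Finite :=
    hg.subset fun i hi h0 => hi (by rw [h0]; exact P.zero_mem)
  obtain ⟨a, ha, hamin⟩ := Set.exists_min_image _ id hfin ⟨i₀, hi₀⟩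
  obtain ⟨b, hb, hbmax⟩ := Set.exists_max_image _ id hfin ⟨i₀, hi₀⟩
  refine ⟨a, b, Nat.pos_of_ne_zero ?_, ha, hb, fun i hi => ⟨hamin i hi, hbmax i hi⟩⟩
  rintro rfl
  exact ha (by simp)

/-- Modulo a prime ideal `P`, the least and greatest indices of `g * h` are the products of those
of `g` (namely `a`, `b`) and of `h` (namely `c`, `d`), and the corresponding coefficients of `g * h`
are the products of the extreme coefficients of the factors. -/
theorem exists_extremes [CommRing R] (P : Ideal R) [P.IsPrime] {g h : ArithmeticFunction R}
    (hg : IsDP g) (hh : IsDP h) {k₀ : ℕ} (hk₀ : (g * h) k₀ ∉ P) :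
    ∃ a b c d, 0 < a ∧ 0 < c ∧
      (∀ i, g i ∉ P → a ≤ i ∧ i ≤ b) ∧ (∀ i, h i ∉ P → c ≤ i ∧ i ≤ d) ∧ a ≤ b ∧ c ≤ d ∧
      (g * h) (a * c) - g a * h c ∈ P ∧ (g * h) (b * d) - g b * h d ∈ P ∧
      (g * h) (a * c) ∉ P ∧ (g * h) (b * d) ∉ P ∧
      ∀ k, (g * h) k ∉ P → a * c ≤ k ∧ k ≤ b * d := by
  obtain ⟨i, j, -, hi, hj⟩ := exists_of_mul_apply_notMem P g h hk₀
  obtain ⟨a, b, ha0, ha, hb, hab⟩ := exists_min_max_s7 P hg hi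
  obtain ⟨c, d, hc0, hc, hd, hcd⟩ := exists_min_max_s7 P hh hj
  have hle := (hab b hb).1
  have hle' := (hcd d hd).1
  have hmin : (g * h) (a * c) - g a * h c ∈ P := by
    refine mul_apply_sub_mem P g h (by positivity) fun i j hij hne => ?_
    by_contra hP
    have h1 := (hab i fun h0 => hP (P.mul_mem_right _ h0)).1
    have h2 := (hcd j fun h0 => hP (P.mul_mem_left _ h0)).1
    rcases h1.eq_or_lt with rfl | h1
    · exact hne (by rw [Nat.eq_of_mul_eq_mul_left ha0 hij])
    · exact (Nat.mul_lt_mul_of_lt_of_le h1 h2 (by omega)).ne' hij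
  have hmax : (g * h) (b * d) - g b * h d ∈ P := by
    refine mul_apply_sub_mem P g h (Nat.mul_ne_zero (by omega) (by omega)) fun i j hij hne => ?_
    by_contra hP
    have h1 := (hab i fun h0 => hP (P.mul_mem_right _ h0)).2
    have h2 := (hcd j fun h0 => hP (P.mul_mem_left _ h0)).2
    rcases h1.eq_or_lt with rfl | h1
    · exact hne (by rw [Nat.eq_of_mul_eq_mul_left (by omega) hij])
    · exact (Nat.mul_lt_mul_of_lt_of_le h1 h2 (by omega)).ne hij
  have key : ∀ {x y z : R}, x - y * z ∈ P → y ∉ P → z ∉ P → x ∉ P := by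
    intro x y z hx hy hz hxP
    have : y * z ∈ P := by simpa using P.sub_mem hxP hx
    exact (Ideal.IsPrime.mem_or_mem ‹_› this).elim hy hz
  refine ⟨a, b, c, d, ha0, hc0, hab, hcd, hle, hle', hmin, hmax, key hmin ha hc, key hmax hb hd,
    fun k hk => ?_⟩
  obtain ⟨i, j, rfl, hi, hj⟩ := exists_of_mul_apply_notMem P g h hk
  exact ⟨Nat.mul_le_mul (hab i hi).1 (hcd j hj).1, Nat.mul_le_mul (hab i hi).2 (hcd j hj).2⟩

/-- The Eisenstein step: if `g * h` is a monomial modulo `p` and `p` divides neither of the extreme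
coefficients `h c`, `h d`, whose indices are coprime, then `h` is constant. -/
theorem const_of_not_dvd [CommRing R] {p : R} (hp : Prime p)
    {g h : ArithmeticFunction R} (hg : IsDP g) (hh : IsDP h) {k c d : ℕ}
    (hk : ¬ p ∣ (g * h) k) (hmono : ∀ i, i ≠ k → p ∣ (g * h) i)
    (hc : ¬ p ∣ h c) (hd : ¬ p ∣ h d) (hcop : Nat.Coprime c d)
    (hbd : ∀ i, h i ≠ 0 → c ≤ i ∧ i ≤ d) : ¬ Nonconst h := by
  have hprime : (Ideal.span {p}).IsPrime := (Ideal.span_singleton_prime hp.ne_zero).2 hp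
  simp only [← Ideal.mem_span_singleton] at hk hmono hc hd
  obtain ⟨a, b, c', d', ha, hc', -, hcd', hab, hle, -, -, h1, h2, -⟩ :=
    exists_extremes (Ideal.span {p}) hg hh hk
  have e1 : a * c' = k := by
    by_contra hne
    exact h1 (hmono _ hne)
  have e2 : b * d' = k := by
    by_contra hne
    exact h2 (hmono _ hne)
  have hcd : c' = d' := by
    by_contra hne
    have : c' < d' := lt_of_le_of_ne hle hne
    have : a * c' < b * d' := Nat.mul_lt_mul_of_le_of_lt hab this (by omega)
    omega
  have hc1 := hcd' c hc
  have hd1 := hcd' d hd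
  obtain rfl : c = d := by omega
  have : c = 1 := by simpa using hcop
  rintro ⟨i, hi, hne⟩
  have := hbd i hne
  omega

/-- A two-term Dirichlet polynomial with support `{m, n}`, `gcd(m,n)=1`,
whose product of coefficients has a prime factor of multiplicity one, is irreducible. -/
theorem two_term_irreducible
    [CommRing R] [IsDomain R] [UniqueFactorizationMonoid R]
    (f : ArithmeticFunction R)
    (m n : ℕ) (hmn : m < n) (hcop : Nat.gcd m n = 1)
    (hm : f m ≠ 0) (hn : f n ≠ 0)
    (hsupp : ∀ i : ℕ, i ≠ m → i ≠ n → f i = 0)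
    (p : R) (hp : Prime p)
    (hdvd : p ∣ f m * f n) (hndvd : ¬ p ^ 2 ∣ f m * f n) :
    IrreducibleDP f := by
  rintro ⟨g, h, hg, hh, hgn, hhn, rfl⟩
  obtain ⟨a, b, c, d, -, -, hab, hcd, -, -, e1, e2, n1, n2, hk⟩ :=
    exists_extremes (⊥ : Ideal R) hg hh (k₀ := m) (by simpa using hm)
  simp only [Ideal.mem_bot, sub_eq_zero] at e1 e2 n1 n2 hab hcd hk
  have hac : a * c = m := by
    by_contra hne
    have : a * c = n := by
      by_contra hne'
      exact n1 (hsupp _ hne hne')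
    have := (hk m hm).1
    omega
  have hbd : b * d = n := by
    by_contra hne
    have : b * d = m := by
      by_contra hne'
      exact n2 (hsupp _ hne' hne)
    have := (hk n hn).2
    omega
  subst hac hbd
  have hmono : ∃ k, ¬ p ∣ (g * h) k ∧ ∀ i, i ≠ k → p ∣ (g * h) i := by
    rcases hp.dvd_or_dvd hdvd with h1 | h1
    · refine ⟨b * d, fun h2 => hndvd (by rw [sq]; exact mul_dvd_mul h1 h2), fun i hi => ?_⟩
      by_cases him : i = a * c
      · rwa [him]
      · rw [hsupp i him hi]
        exact dvd_zero p
    · refine ⟨a * c, fun h2 => hndvd (by rw [sq]; exact mul_dvd_mul h2 h1), fun i hi => ?_⟩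
      by_cases hin : i = b * d
      · rwa [hin]
      · rw [hsupp i hi hin]
        exact dvd_zero p
  obtain ⟨k, hk1, hk2⟩ := hmono
  have hprod : (g * h) (a * c) * (g * h) (b * d) = (g a * g b) * (h c * h d) := by
    rw [e1, e2]
    ring
  have hcopac : Nat.Coprime (a * c) (b * d) := hcop
  by_cases hph : p ∣ h c * h d
  · have hpg : ¬ p ∣ g a * g b := fun h1 =>
      hndvd (by rw [hprod, sq]; exact mul_dvd_mul h1 hph)
    rw [mul_comm g h] at hk1
    simp only [mul_comm g h] at hk2
    exact const_of_not_dvd hp hh hg hk1 hk2 (fun h1 => hpg (h1.mul_right _))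
      (fun h1 => hpg (h1.mul_left _))
      (hcopac.coprime_mul_right.coprime_mul_right_right) hab hgn
  · exact const_of_not_dvd hp hg hh hk1 hk2 (fun h1 => hph (h1.mul_right _))
      (fun h1 => hph (h1.mul_left _))
      (hcopac.coprime_mul_left.coprime_mul_left_right) hcd hhn

end DirichletPoly
end

section
/- Let f be an algebraically primitive Dirichlet polynomial with integer coefficients, with min-degree m and degree n (a_m = f(m) ≠ 0, a_n = f(n) ≠ 0, m < n), let t ≥ 0 be an integer and p a prime number. Assume: (i) ν_p(a_n·n^t) ≠ ν_p(a_m·m^t); (ii) for every i with m < i < n and a_i = f(i) ≠ 0 one has (n/i)^{ν_p(a_i·i^t) − ν_p(a_m·m^t)} > (m/i)^{ν_p(a_i·i^t) − ν_p(a_n·n^t)} as rational numbers; (iii) the gcd of the integer ν_p(a_n·n^t) − ν_p(a_m·m^t) together with the integers ν_q(n) − ν_q(m) for all prime numbers q dividing m·n equals 1. Then f cannot be written as a product of two nonconstant Dirichlet polynomials with integer coefficients. -/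
/-!
The proof is a Newton polygon argument in the plane with coordinates `(log i, ν i)`, where `ν i` is
the `p`-adic valuation of `f i * i ^ t`. The hypothesis on the intermediate coefficients says that
no point of `f` lies below the segment joining its two extreme points. Put
`L = log n - log m`, `S = ν n - ν m` and `w i = L * ν i - S * log i`, so that `w m = w n` is the
minimum of `w` on the support of `f`.

Suppose `f = g * h`, let `m₁ ≤ n₁` and `m₂ ≤ n₂` be the extreme indices of `g` and `h`, and define
the weights of `g` and `h` by the same formula. The product of the terms of `g` and `h` of least
weight (with the smallest possible indices) cannot be cancelled (`coeff_of_dominant`), so the minimum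
of the weight of `f` is at most the sum of the minima for `g` and `h`. Since `w m` and `w n` are the
sums of the weights at `m₁, m₂` and at `n₁, n₂`, all four extreme terms have least weight
(`weight_min_of_mul`). Hence `g` and `h` have Newton polygons of the same slope as `f`:
`L * S₁ = S * (log n₁ - log m₁)`, i.e. `(n₁ / m₁) ^ S = (n / m) ^ S₁`. Comparing `q`-adic
valuations and using the gcd condition, `S ∣ S₁` (`dvd_of_log_eq`), so `n₁ / m₁ = (n / m) ^ k` with
`k` an integer, and likewise `n₂ / m₂ = (n / m) ^ (1 - k)`. Both quotients are at least `1`, so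
`k ∈ {0, 1}` and one of the factors is a monomial; algebraic primitivity of `f` makes it constant.
-/

namespace DirichletPoly

variable {R : Type*}

lemma index_ne_zero {f : ArithmeticFunction ℤ} {i : ℕ} (h : f i ≠ 0) : i ≠ 0 := by
  rintro rfl
  exact h f.map_zero

/-- If the term indexed by `(a, b)` has strictly smaller valuation than every other nonzero term of
the convolution sum at `a * b`, it determines the valuation of that sum. -/
lemma coeff_of_dominant (p : ℕ) [Fact p.Prime] (g h : ArithmeticFunction ℤ) (a b : ℕ)
    (ha : g a ≠ 0) (hb : h b ≠ 0)
    (H : ∀ i j, i * j = a * b → g i ≠ 0 → h j ≠ 0 → (i, j) ≠ (a, b) →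
      padicValInt p (g a) + padicValInt p (h b) < padicValInt p (g i) + padicValInt p (h j)) :
    (g * h) (a * b) ≠ 0 ∧
      padicValInt p ((g * h) (a * b)) = padicValInt p (g a) + padicValInt p (h b) := by
  set e := padicValInt p (g a) + padicValInt p (h b) with he
  have hab : g a * h b ≠ 0 := mul_ne_zero ha hb
  have hval : padicValInt p (g a * h b) = e := padicValInt.mul ha hb
  have hmem : (a, b) ∈ Nat.divisorsAntidiagonal (a * b) := by
    simp [index_ne_zero ha, index_ne_zero hb]
  have hsum : (g * h) (a * b) = g a * h b +
      ∑ x ∈ (Nat.divisorsAntidiagonal (a * b)).erase (a, b), g x.1 * h x.2 := by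
    rw [ArithmeticFunction.mul_apply, ← Finset.add_sum_erase _ _ hmem]
  have hrest : (p : ℤ) ^ (e + 1) ∣
      ∑ x ∈ (Nat.divisorsAntidiagonal (a * b)).erase (a, b), g x.1 * h x.2 := by
    refine Finset.dvd_sum fun x hx => ?_
    rw [Finset.mem_erase, Nat.mem_divisorsAntidiagonal] at hx
    by_cases hg : g x.1 = 0
    · simp [hg]
    by_cases hh : h x.2 = 0
    · simp [hh]
    rw [padicValInt_dvd_iff, padicValInt.mul hg hh]
    exact Or.inr (H x.1 x.2 hx.2.1 hg hh hx.1)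
  have hnd : ¬ (p : ℤ) ^ (e + 1) ∣ (g * h) (a * b) := by
    rw [hsum, dvd_add_left hrest, padicValInt_dvd_iff, hval]
    simp [hab]
  have hd : (p : ℤ) ^ e ∣ (g * h) (a * b) := by
    rw [hsum]
    refine dvd_add ?_ ((pow_dvd_pow _ (Nat.le_succ e)).trans hrest)
    rw [padicValInt_dvd_iff, hval]
    simp
  rw [padicValInt_dvd_iff] at hnd hd
  have h0 : (g * h) (a * b) ≠ 0 := fun h => hnd (Or.inl h)
  refine ⟨h0, ?_⟩
  have h1 : ¬ e + 1 ≤ padicValInt p ((g * h) (a * b)) := fun h => hnd (Or.inr h)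
  have h2 := hd.resolve_left h0
  omega

/-- The smallest indices of `g` and `h` multiply to the smallest index of `g * h`, and the
corresponding coefficient has the expected valuation. -/
lemma min_index_mul (p : ℕ) [Fact p.Prime] (g h : ArithmeticFunction ℤ) (a b m : ℕ)
    (ha : g a ≠ 0) (ha' : ∀ i, g i ≠ 0 → a ≤ i) (hb : h b ≠ 0) (hb' : ∀ i, h i ≠ 0 → b ≤ i)
    (hm : (g * h) m ≠ 0) (hm' : ∀ i, i < m → (g * h) i = 0) :
    a * b = m ∧ padicValInt p ((g * h) m) = padicValInt p (g a) + padicValInt p (h b) := by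
  have ha0 := index_ne_zero ha
  have hb0 := index_ne_zero hb
  obtain ⟨h0, hv⟩ := coeff_of_dominant p g h a b ha hb (by
    intro i j hij hi hj hne
    have h1 := ha' i hi
    have h2 := hb' j hj
    exfalso
    apply hne
    have : i = a := by
      by_contra hc
      have : a * b < i * j :=
        Nat.mul_lt_mul_of_lt_of_le (by omega) h2 (by omega)
      omega
    subst this
    rw [Nat.eq_of_mul_eq_mul_left (by omega) hij])
  have hle : m ≤ a * b := by
    by_contra hc
    exact h0 (hm' _ (by omega))
  have hge : a * b ≤ m := by
    rw [ArithmeticFunction.mul_apply] at hm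
    obtain ⟨x, hx, hx'⟩ := Finset.exists_ne_zero_of_sum_ne_zero hm
    rw [Nat.mem_divisorsAntidiagonal] at hx
    rw [← hx.1]
    exact Nat.mul_le_mul (ha' _ (left_ne_zero_of_mul hx')) (hb' _ (right_ne_zero_of_mul hx'))
  obtain rfl : a * b = m := le_antisymm hge hle
  exact ⟨rfl, hv⟩

/-- The largest indices of `g` and `h` multiply to the largest index of `g * h`, and the
corresponding coefficient has the expected valuation. -/
lemma max_index_mul (p : ℕ) [Fact p.Prime] (g h : ArithmeticFunction ℤ) (a b n : ℕ)
    (ha : g a ≠ 0) (ha' : ∀ i, g i ≠ 0 → i ≤ a) (hb : h b ≠ 0) (hb' : ∀ i, h i ≠ 0 → i ≤ b)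
    (hn : (g * h) n ≠ 0) (hn' : ∀ i, n < i → (g * h) i = 0) :
    a * b = n ∧ padicValInt p ((g * h) n) = padicValInt p (g a) + padicValInt p (h b) := by
  have ha0 := index_ne_zero ha
  have hb0 := index_ne_zero hb
  obtain ⟨h0, hv⟩ := coeff_of_dominant p g h a b ha hb (by
    intro i j hij hi hj hne
    have h1 := ha' i hi
    have h2 := hb' j hj
    exfalso
    apply hne
    have : i = a := by
      by_contra hc
      have : i * j < a * b :=
        Nat.mul_lt_mul_of_lt_of_le (by omega) h2 (by omega)
      omega
    subst this
    rw [Nat.eq_of_mul_eq_mul_left (by omega) hij])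
  have hle : a * b ≤ n := by
    by_contra hc
    exact h0 (hn' _ (by omega))
  have hge : n ≤ a * b := by
    rw [ArithmeticFunction.mul_apply] at hn
    obtain ⟨x, hx, hx'⟩ := Finset.exists_ne_zero_of_sum_ne_zero hn
    rw [Nat.mem_divisorsAntidiagonal] at hx
    rw [← hx.1]
    exact Nat.mul_le_mul (ha' _ (left_ne_zero_of_mul hx')) (hb' _ (right_ne_zero_of_mul hx'))
  obtain rfl : a * b = n := le_antisymm hle hge
  exact ⟨rfl, hv⟩

/-- A real function attains its minimum on the support of a nonzero Dirichlet polynomial at an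
index that is smaller than every other minimizer. -/
lemma exists_first_min (g : ArithmeticFunction ℤ) (hg : IsDP g) (hne : ∃ i, g i ≠ 0) (w : ℕ → ℝ) :
    ∃ a, g a ≠ 0 ∧ (∀ i, g i ≠ 0 → w a ≤ w i) ∧ (∀ i, g i ≠ 0 → i < a → w a < w i) := by
  obtain ⟨i₀, hi₀⟩ := hne
  replace hg : (Function.support ⇑g).Finite := hg
  obtain ⟨a, ha, hmin⟩ := hg.toFinset.exists_min_image (fun i => toLex (w i, i))
    ⟨i₀, by simpa using hi₀⟩
  have hmin' : ∀ i, g i ≠ 0 → w a < w i ∨ w a = w i ∧ a ≤ i := fun i hi => by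
    simpa [Prod.Lex.toLex_le_toLex] using hmin i (by simpa using hi)
  refine ⟨a, by simpa using ha, fun i hi => ?_, fun i hi hia => ?_⟩
  · rcases hmin' i hi with h | h
    · exact h.le
    · exact h.1.le
  · rcases hmin' i hi with h | h
    · exact h
    · omega

/-- Let `u` be completely additive and `L > 0`. If the weight `L * v_p(f i) + u i` of `f = g * h`
is minimal at an index `a * b` whose weight is the sum of the weights of `g` at `a` and of `h`
at `b`, then the weights of `g` and `h` are minimal at `a` and `b`. -/
lemma weight_min_of_mul (p : ℕ) [Fact p.Prime] (g h : ArithmeticFunction ℤ)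
    (hg : IsDP g) (hh : IsDP h) (L : ℝ) (hL : 0 < L) (u : ℕ → ℝ)
    (hu : ∀ i j, i ≠ 0 → j ≠ 0 → u (i * j) = u i + u j) (a b : ℕ) (ha : g a ≠ 0) (hb : h b ≠ 0)
    (hv : padicValInt p ((g * h) (a * b)) = padicValInt p (g a) + padicValInt p (h b))
    (hmin : ∀ i, (g * h) i ≠ 0 →
      L * padicValInt p ((g * h) (a * b)) + u (a * b) ≤ L * padicValInt p ((g * h) i) + u i) :
    (∀ i, g i ≠ 0 → L * padicValInt p (g a) + u a ≤ L * padicValInt p (g i) + u i) ∧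
    (∀ i, h i ≠ 0 → L * padicValInt p (h b) + u b ≤ L * padicValInt p (h i) + u i) := by
  obtain ⟨x, hx, hx1, hx2⟩ :=
    exists_first_min g hg ⟨a, ha⟩ (fun i => L * padicValInt p (g i) + u i)
  obtain ⟨y, hy, hy1, hy2⟩ :=
    exists_first_min h hh ⟨b, hb⟩ (fun i => L * padicValInt p (h i) + u i)
  have hx0 := index_ne_zero hx
  have hy0 := index_ne_zero hy
  obtain ⟨h0, hxy⟩ := coeff_of_dominant p g h x y hx hy (by
    intro i j hij hi hj hne
    have hi0 := index_ne_zero hi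
    have hj0 := index_ne_zero hj
    have huu : u i + u j = u x + u y := by
      rw [← hu i j hi0 hj0, ← hu x y hx0 hy0, hij]
    have key : L * padicValInt p (g x) + u x + (L * padicValInt p (h y) + u y) <
        L * padicValInt p (g i) + u i + (L * padicValInt p (h j) + u j) := by
      rcases lt_trichotomy i x with hlt | rfl | hgt
      · exact add_lt_add_of_lt_of_le (hx2 i hi hlt) (hy1 j hj)
      · exact absurd (by rw [Nat.eq_of_mul_eq_mul_left (by omega) hij]) hne
      · have hjy : j < y := by
          by_contra hc
          have : x * y < i * j :=
            Nat.mul_lt_mul_of_lt_of_le hgt (by omega) (by omega)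
          omega
        exact add_lt_add_of_le_of_lt (hx1 i hi) (hy2 j hj hjy)
    have key2 : L * ((padicValInt p (g x) : ℝ) + padicValInt p (h y)) <
        L * ((padicValInt p (g i) : ℝ) + padicValInt p (h j)) := by
      linarith
    have key3 := lt_of_mul_lt_mul_left key2 hL.le
    exact_mod_cast key3)
  have hle := hmin _ h0
  rw [hxy, hv, hu a b (index_ne_zero ha) (index_ne_zero hb), hu x y hx0 hy0] at hle
  push_cast at hle
  have h1 := hx1 a ha
  have h2 := hy1 b hb
  constructor
  · intro i hi
    have := hx1 i hi
    linarith
  · intro i hi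
    have := hy1 i hi
    linarith

/-- The arithmetic step: `L * S₁ = S * (log n₁ - log m₁)` means `(n₁ / m₁) ^ S = (n / m) ^ S₁`,
and comparing `q`-adic valuations the gcd condition gives `S ∣ S₁`. -/
lemma dvd_of_log_eq (m n m₁ n₁ : ℕ) (hm : m ≠ 0) (hn : n ≠ 0) (hm₁ : m₁ ≠ 0) (hn₁ : n₁ ≠ 0)
    (S S₁ : ℤ) (hS : S ≠ 0)
    (hlog : (Real.log n - Real.log m) * S₁ = S * (Real.log n₁ - Real.log m₁))
    (hgcd : ∀ d : ℕ, ((d : ℤ) ∣ S ∧ ∀ q ∈ (m * n).primeFactors,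
        (d : ℤ) ∣ (n.factorization q : ℤ) - (m.factorization q : ℤ)) → d = 1) :
    S ∣ S₁ := by
  have hmR : (0 : ℝ) < m := by positivity
  have hnR : (0 : ℝ) < n := by positivity
  have hmR₁ : (0 : ℝ) < m₁ := by positivity
  have hnR₁ : (0 : ℝ) < n₁ := by positivity
  have hreal : ((n₁ : ℝ) / m₁) ^ S = ((n : ℝ) / m) ^ S₁ := by
    apply Real.log_injOn_pos
    · exact Set.mem_Ioi.2 (by positivity)
    · exact Set.mem_Ioi.2 (by positivity)
    rw [Real.log_zpow, Real.log_zpow, Real.log_div hnR.ne' hmR.ne', Real.log_div hnR₁.ne' hmR₁.ne']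
    linarith
  have hrat : ((n₁ : ℚ) / m₁) ^ S = ((n : ℚ) / m) ^ S₁ := by
    apply Rat.cast_injective (α := ℝ)
    push_cast
    exact hreal
  have hval : ∀ q : ℕ, q.Prime →
      S ∣ S₁ * ((n.factorization q : ℤ) - (m.factorization q : ℤ)) := by
    intro q hq
    have := Fact.mk hq
    have h := congrArg (padicValRat q) hrat
    have hmQ : (m : ℚ) ≠ 0 := by exact_mod_cast hm
    have hnQ : (n : ℚ) ≠ 0 := by exact_mod_cast hn
    have hmQ₁ : (m₁ : ℚ) ≠ 0 := by exact_mod_cast hm₁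
    have hnQ₁ : (n₁ : ℚ) ≠ 0 := by exact_mod_cast hn₁
    rw [padicValRat.zpow, padicValRat.zpow, padicValRat.div hnQ hmQ, padicValRat.div hnQ₁ hmQ₁,
      padicValRat.of_nat, padicValRat.of_nat, padicValRat.of_nat, padicValRat.of_nat] at h
    rw [Nat.factorization_def _ hq, Nat.factorization_def _ hq, ← h]
    exact dvd_mul_right _ _
  -- `d = S / gcd(S, S₁)` divides every integer entering the gcd condition.
  obtain ⟨d, hd⟩ := Int.gcd_dvd_left S S₁
  obtain ⟨s, hs⟩ := Int.gcd_dvd_right S S₁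
  have hg0 : ((Int.gcd S S₁ : ℕ) : ℤ) ≠ 0 := by
    intro h0
    rw [h0, zero_mul] at hd
    exact hS hd
  have hcop : IsCoprime d s := by
    refine ⟨Int.gcdA S S₁, Int.gcdB S S₁, ?_⟩
    have hb := Int.gcd_eq_gcd_ab S S₁
    apply mul_left_cancel₀ hg0
    linear_combination (-Int.gcdA S S₁) * hd - Int.gcdB S S₁ * hs - hb
  have hd1 : d.natAbs = 1 := by
    apply hgcd
    refine ⟨Int.natAbs_dvd.2 (Dvd.intro_left _ hd.symm), fun q hq => Int.natAbs_dvd.2 ?_⟩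
    have h := hval q (Nat.prime_of_mem_primeFactors hq)
    apply hcop.dvd_of_dvd_mul_left
    apply (mul_dvd_mul_iff_left hg0).1
    rw [← mul_assoc, ← hs, ← hd]
    exact h
  have hu : IsUnit d := Int.isUnit_iff_natAbs_eq.2 hd1
  rw [hd, hu.mul_right_dvd]
  exact Int.gcd_dvd_right S S₁

/-- An algebraically primitive `f` has no nonconstant monomial factor. -/
lemma not_monomial_factor (g h : ArithmeticFunction ℤ) (hprim : AlgPrimitive (g * h))
    (hg : Nonconst g) (a : ℕ) (ha : ∀ i, g i ≠ 0 → i = a) : False := by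
  obtain ⟨i, hi2, hi⟩ := hg
  have ha1 : a = 1 := by
    apply hprim
    intro k hk
    rw [ArithmeticFunction.mul_apply] at hk
    obtain ⟨x, hx, hx'⟩ := Finset.exists_ne_zero_of_sum_ne_zero hk
    rw [Nat.mem_divisorsAntidiagonal] at hx
    rw [← ha _ (left_ne_zero_of_mul hx')]
    exact Dvd.intro _ hx.1
  have := ha i hi
  omega

lemma exists_extremes_s8 (g : ArithmeticFunction ℤ) (hg : IsDP g) (hne : Nonconst g) :
    ∃ a b, g a ≠ 0 ∧ g b ≠ 0 ∧ (∀ i, g i ≠ 0 → a ≤ i) ∧ (∀ i, g i ≠ 0 → i ≤ b) := by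
  obtain ⟨i₀, -, hi₀⟩ := hne
  replace hg : (Function.support ⇑g).Finite := hg
  obtain ⟨a, ha, ha'⟩ := hg.toFinset.exists_min_image id ⟨i₀, by simpa using hi₀⟩
  obtain ⟨b, hb, hb'⟩ := hg.toFinset.exists_max_image id ⟨i₀, by simpa using hi₀⟩
  exact ⟨a, b, by simpa using ha, by simpa using hb, fun i hi => ha' i (by simpa using hi),
    fun i hi => hb' i (by simpa using hi)⟩

/-- Dumas-type criterion with a shift, over the integers. Here `ν i` is
the `p`-adic valuation of `f i · i ^ t`. -/
theorem dumas_shift_irreducible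
    (f : ArithmeticFunction ℤ) (hfin : IsDP f) (hprim : AlgPrimitive f)
    (m n : ℕ) (hmn : m < n)
    (hmin : f m ≠ 0) (hmin' : ∀ i : ℕ, i < m → f i = 0)
    (hdeg : f n ≠ 0) (hdeg' : ∀ i : ℕ, n < i → f i = 0)
    (t : ℕ) (p : ℕ) (hp : p.Prime)
    (ν : ℕ → ℕ) (hν : ∀ i : ℕ, f i ≠ 0 →
      (p : ℤ) ^ ν i ∣ f i * (i : ℤ) ^ t ∧ ¬ (p : ℤ) ^ (ν i + 1) ∣ f i * (i : ℤ) ^ t)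
    (h1 : ν n ≠ ν m)
    (h2 : ∀ i : ℕ, m < i → i < n → f i ≠ 0 →
      ((n : ℚ) / (i : ℚ)) ^ ((ν i : ℤ) - (ν m : ℤ)) >
        ((m : ℚ) / (i : ℚ)) ^ ((ν i : ℤ) - (ν n : ℤ)))
    (h3 : ∀ d : ℕ, ((d : ℤ) ∣ (ν n : ℤ) - (ν m : ℤ) ∧
      ∀ q ∈ (m * n).primeFactors,
        (d : ℤ) ∣ (n.factorization q : ℤ) - (m.factorization q : ℤ)) → d = 1) :
    IrreducibleDP f := by
  rintro ⟨g, h, hg, hh, hgn, hhn, rfl⟩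
  have := Fact.mk hp
  have hm0 := index_ne_zero hmin
  have hn0 := index_ne_zero hdeg
  have hνeq : ∀ i, (g * h) i ≠ 0 →
      ν i = padicValInt p ((g * h) i) + t * padicValNat p i := by
    intro i hi
    have hi0 : (i : ℤ) ≠ 0 := by exact_mod_cast index_ne_zero hi
    obtain ⟨ha, hb⟩ := hν i hi
    have hpw : padicValInt p ((g * h) i * (i : ℤ) ^ t) =
        padicValInt p ((g * h) i) + t * padicValNat p i := by
      rw [padicValInt.mul hi (pow_ne_zero _ hi0), ← Nat.cast_pow, padicValInt.of_nat,
        padicValNat.pow]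
    rw [padicValInt_dvd_iff, hpw] at ha hb
    have hne : (g * h) i * (i : ℤ) ^ t ≠ 0 := mul_ne_zero hi (pow_ne_zero _ hi0)
    simp only [hne, false_or] at ha hb
    omega
  set L : ℝ := Real.log n - Real.log m with hLdef
  set S : ℤ := (ν n : ℤ) - ν m with hSdef
  have hS : S ≠ 0 := by omega
  have hSR : (S : ℝ) = (ν n : ℝ) - ν m := by rw [hSdef]; push_cast; rfl
  have hL : 0 < L := sub_pos.2 (Real.log_lt_log (by positivity) (by exact_mod_cast hmn))
  -- The weight `L * ν i - S * log i` is smallest at `m`.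
  have hwt : ∀ i, (g * h) i ≠ 0 →
      L * ν m - S * Real.log m ≤ L * ν i - S * Real.log i := by
    intro i hi
    have hi0 := index_ne_zero hi
    have him : m ≤ i := by
      by_contra hc
      exact hi (hmin' i (by omega))
    have hin : i ≤ n := by
      by_contra hc
      exact hi (hdeg' i (by omega))
    rw [hSR, hLdef]
    rcases him.eq_or_lt with rfl | him
    · exact le_rfl
    rcases hin.eq_or_lt with rfl | hin
    · linarith
    have hq := h2 i him hin hi
    have hr : ((m : ℝ) / i) ^ ((ν i : ℤ) - (ν n : ℤ)) < ((n : ℝ) / i) ^ ((ν i : ℤ) - (ν m : ℤ)) := by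
      have hc := (Rat.cast_lt (K := ℝ)).2 hq
      rw [Rat.cast_zpow, Rat.cast_zpow] at hc
      simpa only [Rat.cast_div, Rat.cast_natCast] using hc
    have hlog := Real.log_lt_log (by positivity) hr
    rw [Real.log_zpow, Real.log_zpow, Real.log_div (by positivity) (by positivity),
      Real.log_div (by positivity) (by positivity)] at hlog
    push_cast at hlog
    linarith
  have hwn : L * ν m - S * Real.log m = L * ν n - S * Real.log n := by
    rw [hSR, hLdef]
    ring
  -- The part of the weight that depends on the index only.
  set u : ℕ → ℝ := fun i => L * (t * padicValNat p i) - S * Real.log i with hudef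
  have hu : ∀ i j, i ≠ 0 → j ≠ 0 → u (i * j) = u i + u j := by
    intro i j hi hj
    have hiR : (i : ℝ) ≠ 0 := by exact_mod_cast hi
    have hjR : (j : ℝ) ≠ 0 := by exact_mod_cast hj
    simp only [hudef]
    rw [padicValNat.mul hi hj, Nat.cast_mul, Real.log_mul hiR hjR]
    push_cast
    ring
  have hwu : ∀ i, (g * h) i ≠ 0 →
      L * padicValInt p ((g * h) i) + u i = L * ν i - S * Real.log i := by
    intro i hi
    rw [hνeq i hi]
    simp only [hudef]
    push_cast
    ring
  obtain ⟨m₁, n₁, hgm, hgn1, hgm', hgn'⟩ := exists_extremes_s8 g hg hgn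
  obtain ⟨m₂, n₂, hhm, hhn1, hhm', hhn'⟩ := exists_extremes_s8 h hh hhn
  obtain ⟨hmm, hmv⟩ := min_index_mul p g h m₁ m₂ m hgm hgm' hhm hhm' hmin hmin'
  obtain ⟨hnn, hnv⟩ := max_index_mul p g h n₁ n₂ n hgn1 hgn' hhn1 hhn' hdeg hdeg'
  have hm₁ := index_ne_zero hgm
  have hn₁ := index_ne_zero hgn1
  have hm₂ := index_ne_zero hhm
  have hn₂ := index_ne_zero hhn1
  obtain ⟨hA, hB⟩ := weight_min_of_mul p g h hg hh L hL u hu m₁ m₂ hgm hhm (by rw [hmm, hmv]) (by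
    intro i hi
    rw [hmm, hwu m hmin, hwu i hi]
    exact hwt i hi)
  obtain ⟨hC, hD⟩ := weight_min_of_mul p g h hg hh L hL u hu n₁ n₂ hgn1 hhn1 (by rw [hnn, hnv]) (by
    intro i hi
    rw [hnn, hwu n hdeg, hwu i hi, ← hwn]
    exact hwt i hi)
  have hE := le_antisymm (hA n₁ hgn1) (hC m₁ hgm)
  -- The height of the Newton polygon of `g`.
  set S₁ : ℤ := ((padicValInt p (g n₁) : ℤ) + t * padicValNat p n₁) -
    (padicValInt p (g m₁) + t * padicValNat p m₁) with hS₁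
  have hlog₁ : L * S₁ = S * (Real.log n₁ - Real.log m₁) := by
    simp only [hudef] at hE
    rw [hS₁]
    simp only [Int.cast_sub, Int.cast_add, Int.cast_mul, Int.cast_natCast]
    linarith
  obtain ⟨k, hk⟩ := dvd_of_log_eq m n m₁ n₁ hm0 hn0 hm₁ hn₁ S S₁ hS hlog₁ h3
  have hSR0 : (S : ℝ) ≠ 0 := by exact_mod_cast hS
  have hk₁ : Real.log n₁ - Real.log m₁ = k * L := by
    apply mul_left_cancel₀ hSR0
    rw [← hlog₁, hk]
    push_cast
    ring
  have hk₂ : Real.log n₂ - Real.log m₂ = (1 - k) * L := by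
    have e1 : Real.log n = Real.log n₁ + Real.log n₂ := by
      rw [← hnn, Nat.cast_mul, Real.log_mul (by positivity) (by positivity)]
    have e2 : Real.log m = Real.log m₁ + Real.log m₂ := by
      rw [← hmm, Nat.cast_mul, Real.log_mul (by positivity) (by positivity)]
    linarith
  have hle₁ : (0 : ℝ) ≤ Real.log n₁ - Real.log m₁ :=
    sub_nonneg.2 (Real.log_le_log (by positivity) (by exact_mod_cast hgm' _ hgn1))
  have hle₂ : (0 : ℝ) ≤ Real.log n₂ - Real.log m₂ :=
    sub_nonneg.2 (Real.log_le_log (by positivity) (by exact_mod_cast hhm' _ hhn1))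
  have hk0 : 0 ≤ k := by
    rw [hk₁] at hle₁
    exact_mod_cast nonneg_of_mul_nonneg_left hle₁ hL
  have hk1 : k ≤ 1 := by
    rw [hk₂] at hle₂
    have := nonneg_of_mul_nonneg_left hle₂ hL
    exact_mod_cast sub_nonneg.1 this
  have hinj : ∀ a b : ℕ, a ≠ 0 → b ≠ 0 → Real.log a - Real.log b = 0 → a = b := by
    intro a b ha hb hab
    have := Real.log_injOn_pos (Set.mem_Ioi.2 (by positivity : (0 : ℝ) < a))
      (Set.mem_Ioi.2 (by positivity : (0 : ℝ) < b)) (sub_eq_zero.1 hab)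
    exact_mod_cast this
  obtain rfl | rfl : k = 0 ∨ k = 1 := by omega
  · have heq : n₁ = m₁ := hinj _ _ hn₁ hm₁ (by simpa using hk₁)
    exact not_monomial_factor g h hprim hgn m₁
      fun i hi => le_antisymm (heq ▸ hgn' i hi) (hgm' i hi)
  · have heq : n₂ = m₂ := hinj _ _ hn₂ hm₂ (by simpa using hk₂)
    rw [mul_comm] at hprim
    exact not_monomial_factor h g hprim hhn m₂
      fun i hi => le_antisymm (heq ▸ hhn' i hi) (hhm' i hi)

end DirichletPoly
end
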